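/- arXiv:1111.5458 — 3 statements merged into one kernel-verified Lean document; each statement's English description precedes it below -/
import Mathlib

section
/- If G is a finite simple graph with |V(G)| ≤ χ(G) + √(χ(G)), then χ(G) = ch^OL(G), i.e., the on-line choice number of G equals its chromatic number. -/
variable {V : Type} [Fintype V] [DecidableEq V]

/-- Approximations to on-line `f`-choosability of the subgraph of `G` induced on `S`:
`OnlineChoosableAux G n S f` says that the defining recursion certifies choosability
within `n` unfoldings. -/
def OnlineChoosableAux (G : SimpleGraph V) : ℕ → Finset V → (V → ℕ) → Prop
  | 0, _S, _f => False
  | n + 1, S, f =>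
      ((∀ u ∈ S, ∀ v ∈ S, ¬ G.Adj u v) ∧ ∀ v ∈ S, 1 ≤ f v) ∨
      ((∃ u ∈ S, ∃ v ∈ S, G.Adj u v) ∧
        ∀ U : Finset V, U ⊆ S → U.Nonempty →
          ∃ I : Finset V, I ⊆ U ∧ (∀ u ∈ I, ∀ v ∈ I, ¬ G.Adj u v) ∧
            OnlineChoosableAux G n (S \ I) (fun v => f v - if v ∈ U then 1 else 0))

/-- The subgraph of `G` induced on `S` is on-line `f`-choosable: the least fixed point of
the recursion “if edgeless then `f ≥ 1` everywhere, else for every nonempty `U ⊆ S`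
there is an independent `I ⊆ U` with `G - I` on-line `(f - δ_U)`-choosable”. -/
def OnlineChoosable (G : SimpleGraph V) (S : Finset V) (f : V → ℕ) : Prop :=
  ∃ n, OnlineChoosableAux G n S f

/-- The on-line choice number: least `k` such that `G` is on-line `k`-choosable. -/
noncomputable def onlineChoiceNumber (G : SimpleGraph V) : ℕ :=
  sInf {k | OnlineChoosable G Finset.univ (fun _ => k)}

/-- The chromatic number of `G` as a natural number. -/
noncomputable def chromNum (G : SimpleGraph V) : ℕ := sInf {n | G.Colorable n}

/-- Fuelled version of the game in which the Painter always colours something. -/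
def PWin (G : SimpleGraph V) : ℕ → Finset V → (V → ℕ) → Prop
  | 0, S, _f => S = ∅
  | n + 1, S, f => (∀ v ∈ S, 1 ≤ f v) ∧
        ∀ U : Finset V, U ⊆ S → U.Nonempty →
          ∃ I : Finset V, I ⊆ U ∧ I.Nonempty ∧ (∀ u ∈ I, ∀ v ∈ I, ¬ G.Adj u v) ∧
            PWin G n (S \ I) (fun v => f v - if v ∈ U then 1 else 0)

theorem PWin.aux {G : SimpleGraph V} : ∀ (n : ℕ) (S : Finset V) (f : V → ℕ),
    PWin G n S f → OnlineChoosableAux G (n + 1) S f := by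
  intro n
  induction n with
  | zero =>
    intro S f h
    simp only [PWin] at h
    subst h
    left
    simp
  | succ n ih =>
    intro S f h
    obtain ⟨h1, h2⟩ := h
    by_cases he : ∃ u ∈ S, ∃ v ∈ S, G.Adj u v
    · right
      refine ⟨he, fun U hU hne => ?_⟩
      obtain ⟨I, hI, -, hind, hw⟩ := h2 U hU hne
      exact ⟨I, hI, hind, ih _ _ hw⟩
    · left
      push Not at he
      exact ⟨he, h1⟩

theorem PWin.mono_f {G : SimpleGraph V} : ∀ (n : ℕ) (S : Finset V) (f g : V → ℕ),
    (∀ v ∈ S, f v ≤ g v) → PWin G n S f → PWin G n S g := by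
  intro n
  induction n with
  | zero => intro S f g _ h; exact h
  | succ n ih =>
    intro S f g hfg h
    obtain ⟨h1, h2⟩ := h
    refine ⟨fun v hv => (h1 v hv).trans (hfg v hv), fun U hU hne => ?_⟩
    obtain ⟨I, hI, hIne, hind, hw⟩ := h2 U hU hne
    refine ⟨I, hI, hIne, hind, ih _ _ _ ?_ hw⟩
    intro v hv
    have := hfg v (Finset.mem_sdiff.1 hv).1
    exact Nat.sub_le_sub_right this _

theorem PWin.succ {G : SimpleGraph V} : ∀ (n : ℕ) (S : Finset V) (f : V → ℕ),
    PWin G n S f → PWin G (n + 1) S f := by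
  intro n
  induction n with
  | zero =>
    intro S f h
    simp only [PWin] at h
    subst h
    refine ⟨by simp, fun U hU hne => ?_⟩
    rw [Finset.subset_empty.1 hU] at hne
    simp at hne
  | succ n ih =>
    intro S f h
    obtain ⟨h1, h2⟩ := h
    refine ⟨h1, fun U hU hne => ?_⟩
    obtain ⟨I, hI, hIne, hind, hw⟩ := h2 U hU hne
    exact ⟨I, hI, hIne, hind, ih _ _ hw⟩

theorem PWin.mono_n {G : SimpleGraph V} {n m : ℕ} (hnm : n ≤ m) {S : Finset V} {f : V → ℕ}
    (h : PWin G n S f) : PWin G m S f := by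
  induction m, hnm using Nat.le_induction with
  | base => exact h
  | succ m _ ih => exact PWin.succ _ _ _ ih

/-- A vertex with many tokens can be added for free. -/
theorem PWin.degen {G : SimpleGraph V} : ∀ (n : ℕ) (S : Finset V) (f : V → ℕ) (y : V),
    y ∈ S → S.card ≤ f y → PWin G n (S.erase y) f → PWin G (n + 1) S f := by
  intro n
  induction n with
  | zero =>
    intro S f y hy hf h
    simp only [PWin] at h
    have hS : S = {y} := by
      rw [← Finset.insert_erase hy, h]; rfl
    subst hS
    simp only [Finset.card_singleton] at hf
    refine ⟨by simpa using hf, fun U hU hne => ?_⟩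
    have hUe : U = {y} := (Finset.subset_singleton_iff.1 hU).resolve_left hne.ne_empty
    subst hUe
    refine ⟨{y}, subset_rfl, hne, by simp, ?_⟩
    simp [PWin]
  | succ n ih =>
    intro S f y hy hf h
    have h0 := h
    obtain ⟨h1, h2⟩ := h
    have hpos : 1 ≤ S.card := Finset.card_pos.2 ⟨y, hy⟩
    refine ⟨fun v hv => ?_, fun U hU hne => ?_⟩
    · by_cases hvy : v = y
      · subst hvy; omega
      · exact h1 v (Finset.mem_erase.2 ⟨hvy, hv⟩)
    by_cases hU' : (U.erase y).Nonempty
    · obtain ⟨I, hI, hIne, hind, hw⟩ := h2 (U.erase y) (Finset.erase_subset_erase y hU) hU'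
      have hyI : y ∉ I := fun hh => by simpa using hI hh
      have hIU : I ⊆ U := hI.trans (Finset.erase_subset _ _)
      refine ⟨I, hIU, hIne, hind, ih _ _ y (Finset.mem_sdiff.2 ⟨hy, hyI⟩) ?_ ?_⟩
      · have hlt : (S \ I).card < S.card := by
          apply Finset.card_lt_card
          obtain ⟨i, hi⟩ := hIne
          refine Finset.ssubset_iff_of_subset Finset.sdiff_subset |>.2 ⟨i, hU (hIU hi), ?_⟩
          simp [hi]
        have : (if y ∈ U then 1 else 0) ≤ 1 := by split_ifs <;> simp
        omega
      · have hSe : (S \ I).erase y = S.erase y \ I := by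
          ext v; simp only [Finset.mem_erase, Finset.mem_sdiff]; tauto
        rw [hSe]
        refine PWin.mono_f _ _ _ _ ?_ hw
        intro v hv
        have hvy : v ≠ y := by
          simp only [Finset.mem_erase, Finset.mem_sdiff] at hv; exact hv.1.1
        simp [hvy]
    · have hUe : U = {y} := by
        rw [Finset.not_nonempty_iff_eq_empty, Finset.erase_eq_empty_iff] at hU'
        exact hU'.resolve_left hne.ne_empty
      subst hUe
      refine ⟨{y}, subset_rfl, hne, by simp, ?_⟩
      rw [← Finset.erase_eq]
      refine PWin.mono_f _ _ _ _ ?_ h0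
      intro v hv
      have hvy : v ≠ y := (Finset.mem_erase.1 hv).1
      simp [hvy]

theorem PWin.degen_many {G : SimpleGraph V} (S' : Finset V) (f : V → ℕ) :
    ∀ (d : ℕ) (T : Finset V), (T \ S').card = d → S' ⊆ T → (∀ y ∈ T \ S', T.card ≤ f y) →
    PWin G S'.card S' f → PWin G T.card T f := by
  intro d
  induction d with
  | zero =>
    intro T hd hST _ h
    have : T ⊆ S' := by
      rw [Finset.card_eq_zero, Finset.sdiff_eq_empty_iff_subset] at hd; exact hd
    rw [Finset.Subset.antisymm this hST]; exact h
  | succ d ih =>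
    intro T hd hST hf h
    obtain ⟨y, hy⟩ : (T \ S').Nonempty := Finset.card_pos.1 (by omega)
    have hyT := (Finset.mem_sdiff.1 hy).1
    have hyS := (Finset.mem_sdiff.1 hy).2
    have hc : (T.erase y).card + 1 = T.card := Finset.card_erase_add_one hyT
    rw [← hc]
    refine PWin.degen _ _ _ y hyT (hf y hy) (ih _ ?_ ?_ ?_ h)
    · rw [Finset.erase_sdiff_comm, Finset.card_erase_of_mem hy]; omega
    · exact Finset.subset_erase.2 ⟨hST, hyS⟩
    · intro z hz
      have := hf z (by simp only [Finset.mem_erase, Finset.mem_sdiff] at hz ⊢; tauto)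
      omega

/-- The invariant kept by the Painter. `B` is the set of big colour classes. -/
structure PInv {ι : Type} [DecidableEq ι] (C : V → ι) (S : Finset V) (f : V → ℕ)
    (B : Finset ι) : Prop where
  uniq : ∀ u ∈ S, ∀ v ∈ S, C u = C v → C u ∉ B → u = v
  single : ∀ t, (S.filter (fun v => C v ∉ B ∧ f v ≤ B.card + t)).card ≤ t
  big : ∀ X ⊆ S, X.Nonempty → (∀ u ∈ X, ∀ v ∈ X, C u = C v) →
    (X.card - 1) * (S.card - 1) + B.card ≤ ∑ x ∈ X, f x

/-- Token loss on a set. -/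
theorem sum_loss (X U : Finset V) (f : V → ℕ) :
    ∑ x ∈ X, f x ≤ ∑ x ∈ X, (f x - if x ∈ U then 1 else 0) + (X.filter (· ∈ U)).card := by
  rw [Finset.card_filter, ← Finset.sum_add_distrib]
  apply Finset.sum_le_sum
  intro x _
  omega

theorem PInv.win {ι : Type} [DecidableEq ι] {G : SimpleGraph V} (C : V → ι)
    (hC : ∀ u v, G.Adj u v → C u ≠ C v) : ∀ (n : ℕ) (S : Finset V) (f : V → ℕ) (B : Finset ι),
    S.card = n → PInv C S f B → PWin G S.card S f := by
  intro n
  induction n using Nat.strong_induction_on with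
  | _ n ih =>
  intro S f B hn hinv
  rcases n with _ | n
  · rw [hn]; exact Finset.card_eq_zero.1 hn
  rw [hn]
  have hsing : ∀ v ∈ S, C v ∉ B → B.card + 1 ≤ f v := by
    intro v hv hvB
    by_contra hlt
    have h0 := hinv.single 0
    have : v ∈ S.filter (fun v => C v ∉ B ∧ f v ≤ B.card + 0) :=
      Finset.mem_filter.2 ⟨hv, hvB, by omega⟩
    have := Finset.card_pos.2 ⟨v, this⟩
    omega
  refine ⟨fun v hv => ?_, fun U hU hne => ?_⟩
  · by_cases hvB : C v ∈ B
    · have h1 := hinv.big {v} (by simpa using hv) (by simp) (by simp)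
      have h2 := Finset.card_pos.2 ⟨_, hvB⟩
      simp at h1
      omega
    · have := hsing v hv hvB; omega
  by_cases hcase : ∃ w ∈ U, C w ∈ B ∧ ∀ y ∈ S, y ∉ U → C y = C w → n ≤ f y
  · -- colour the class of `w` within `U`
    obtain ⟨w, hwU, hwB, hw⟩ := hcase
    have hwI : w ∈ U.filter (fun v => C v = C w) := by simp [hwU]
    refine ⟨U.filter (fun v => C v = C w), Finset.filter_subset _ _, ⟨w, hwI⟩, ?_, ?_⟩
    · intro u hu v hv huv
      exact hC u v huv ((Finset.mem_filter.1 hu).2.trans (Finset.mem_filter.1 hv).2.symm)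
    set I := U.filter (fun v => C v = C w) with hIdef
    set f' : V → ℕ := fun v => f v - if v ∈ U then 1 else 0 with hf'
    set S' := S.filter (fun v => C v ≠ C w) with hS'
    have hIS : I ⊆ S := (Finset.filter_subset _ _).trans hU
    have hTc : (S \ I).card ≤ n := by
      have h1 := Finset.card_sdiff_add_card_eq_card hIS
      have h2 := Finset.card_pos.2 ⟨w, hwI⟩
      omega
    have hS'T : S' ⊆ S \ I := by
      intro v hv
      simp only [hS', hIdef, Finset.mem_filter, Finset.mem_sdiff] at hv ⊢
      tauto
    have hS'c : S'.card ≤ n := (Finset.card_le_card hS'T).trans hTc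
    have hBc : (B.erase (C w)).card + 1 = B.card := Finset.card_erase_add_one hwB
    refine PWin.mono_n hTc (PWin.degen_many S' f' _ _ rfl hS'T ?_ ?_)
    · intro y hy
      simp only [hS', hIdef, Finset.mem_filter, Finset.mem_sdiff] at hy
      have hyU : y ∉ U := by tauto
      have hyC : C y = C w := by tauto
      have := hw y hy.1.1 hyU hyC
      simp only [hf', hyU, if_false]
      omega
    · refine ih S'.card (by omega) S' f' (B.erase (C w)) rfl ⟨?_, ?_, ?_⟩
      · intro u hu v hv huv hn'
        have hu' := Finset.mem_filter.1 hu
        have hv' := Finset.mem_filter.1 hv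
        refine hinv.uniq u hu'.1 v hv'.1 huv ?_
        intro hh
        exact hn' (Finset.mem_erase.2 ⟨hu'.2, hh⟩)
      · intro t
        refine (Finset.card_le_card ?_).trans (hinv.single t)
        intro v hv
        simp only [hS', Finset.mem_filter, Finset.mem_erase] at hv ⊢
        refine ⟨hv.1.1, fun hh => hv.2.1 ⟨hv.1.2, hh⟩, ?_⟩
        have := hv.2.2
        simp only [hf'] at this
        split_ifs at this <;> omega
      · intro X hX hXne hXm
        have h1 := hinv.big X (hX.trans (Finset.filter_subset _ _)) hXne hXm
        have h2 := sum_loss X U f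
        have h3 := Finset.card_filter_le X (· ∈ U)
        have h4 := Finset.card_pos.2 hXne
        have h5 := h4.trans_le (Finset.card_le_card hX)
        have h6 : (X.card - 1) * (S'.card - 1) + (X.card - 1) ≤ (X.card - 1) * (S.card - 1) := by
          rw [← Nat.mul_succ]
          exact Nat.mul_le_mul_left _ (by omega)
        change _ ≤ ∑ x ∈ X, (f x - if x ∈ U then 1 else 0)
        omega
  · push Not at hcase
    have hv : ∃ v ∈ U, ∀ u ∈ U, C u ∉ B → C v ∉ B ∧ f v ≤ f u := by
      by_cases hs : (U.filter (fun v => C v ∉ B)).Nonempty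
      · obtain ⟨v, hv, hmin⟩ := Finset.exists_min_image _ f hs
        have hv' := Finset.mem_filter.1 hv
        exact ⟨v, hv'.1, fun u hu huB => ⟨hv'.2, hmin u (Finset.mem_filter.2 ⟨hu, huB⟩)⟩⟩
      · obtain ⟨v, hv⟩ := hne
        refine ⟨v, hv, fun u hu huB => ?_⟩
        exact absurd ⟨u, Finset.mem_filter.2 ⟨hu, huB⟩⟩ hs
    obtain ⟨v, hvU, hv⟩ := hv
    have hvS := hU hvU
    have hec := Finset.card_erase_add_one hvS
    refine ⟨{v}, by simpa using hvU, by simp, by simp, ?_⟩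
    rw [← Finset.erase_eq]
    have hn' : (S.erase v).card = n := by omega
    rw [← hn']
    refine ih _ (by omega) _ _ B rfl ⟨?_, ?_, ?_⟩
    · intro a ha b hb
      exact hinv.uniq a (Finset.mem_of_mem_erase ha) b (Finset.mem_of_mem_erase hb)
    · intro t
      by_cases hvt : C v ∉ B ∧ f v ≤ B.card + (t + 1)
      · have h1 := hinv.single (t + 1)
        have hmem : v ∈ S.filter (fun v => C v ∉ B ∧ f v ≤ B.card + (t + 1)) :=
          Finset.mem_filter.2 ⟨hvS, hvt⟩
        have h2 := Finset.card_erase_add_one hmem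
        refine (Finset.card_le_card ?_).trans (by omega :
          ((S.filter (fun v => C v ∉ B ∧ f v ≤ B.card + (t + 1))).erase v).card ≤ t)
        intro a ha
        simp only [Finset.mem_filter, Finset.mem_erase] at ha ⊢
        refine ⟨ha.1.1, ha.1.2, ha.2.1, ?_⟩
        have := ha.2.2
        split_ifs at this <;> omega
      · refine (Finset.card_le_card ?_).trans (hinv.single t)
        intro a ha
        simp only [Finset.mem_filter, Finset.mem_erase] at ha ⊢
        refine ⟨ha.1.2, ha.2.1, ?_⟩
        have h3 := ha.2.2
        by_cases haU : a ∈ U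
        · have h4 := hv a haU ha.2.1
          rw [if_pos haU] at h3
          exact absurd ⟨h4.1, by omega⟩ hvt
        · rw [if_neg haU] at h3; omega
    · intro X hX hXne hXm
      have hXS : X ⊆ S := hX.trans (Finset.erase_subset _ _)
      have h1 := hinv.big X hXS hXne hXm
      have h2 := sum_loss X U f
      have h3 := Finset.card_filter_le X (· ∈ U)
      have h4 := Finset.card_pos.2 hXne
      have h5 := h4.trans_le (Finset.card_le_card hX)
      have h6 : (X.card - 1) * ((S.erase v).card - 1) + (X.card - 1)
          ≤ (X.card - 1) * (S.card - 1) := by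
        rw [← Nat.mul_succ]
        exact Nat.mul_le_mul_left _ (by omega)
      by_cases hXU : X ⊆ U
      · suffices hs : (X.card - 1) * (S.card - 1) + B.card + 1 ≤ ∑ x ∈ X, f x by omega
        obtain ⟨x, hx⟩ := hXne
        by_cases hxB : C x ∈ B
        · obtain ⟨y, hyS, hyU, hyx, hyf⟩ := hcase x (hXU hx) hxB
          have hyX : y ∉ X := fun hh => hyU (hXU hh)
          have h7 := hinv.big (insert y X) (Finset.insert_subset hyS hXS) (by simp) (by
            have key : ∀ u ∈ insert y X, C u = C x := by
              intro u hu
              rcases Finset.mem_insert.1 hu with rfl | hu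
              · exact hyx
              · exact hXm u hu x hx
            intro a ha b hb
            rw [key a ha, key b hb])
          rw [Finset.card_insert_of_notMem hyX, Finset.sum_insert hyX] at h7
          have h8 : (X.card + 1 - 1) * (S.card - 1)
              = (X.card - 1) * (S.card - 1) + (S.card - 1) := by
            rw [← Nat.succ_mul]
            congr 1
            omega
          omega
        · have hXe : X = {x} := by
            apply Finset.eq_singleton_iff_unique_mem.2 ⟨hx, ?_⟩
            intro a ha
            exact (hinv.uniq x (hXS hx) a (hXS ha) (hXm x hx a ha) hxB).symm
          have := hsing x (hXS hx) hxB
          rw [hXe]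
          simpa using this
      · have h7 : (X.filter (· ∈ U)).card < X.card := by
          apply Finset.card_lt_card
          refine Finset.filter_ssubset.2 ?_
          simpa [Finset.subset_iff] using hXU
        omega

theorem colorable_of_aux {G : SimpleGraph V} : ∀ (n k : ℕ) (S : Finset V) (f : V → ℕ),
    (∀ v ∈ S, f v = k) → OnlineChoosableAux G n S f →
    ∃ c : V → ℕ, (∀ v ∈ S, c v < k) ∧ ∀ u ∈ S, ∀ v ∈ S, G.Adj u v → c u ≠ c v := by
  intro n
  induction n with
  | zero => intro k S f _ h; exact h.elim
  | succ n ih =>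
    intro k S f hf h
    rcases h with ⟨h1, h2⟩ | ⟨⟨u, hu, v, hv, huv⟩, h2⟩
    · refine ⟨fun _ => 0, fun v hv => ?_, fun u hu v hv huv => (h1 u hu v hv huv).elim⟩
      have := h2 v hv
      rw [hf v hv] at this
      exact this
    · obtain ⟨I, hI, hind, hw⟩ := h2 S subset_rfl ⟨u, hu⟩
      obtain ⟨c, hc1, hc2⟩ := ih (k - 1) (S \ I) _ (by
        intro a ha
        have haS := (Finset.mem_sdiff.1 ha).1
        simp [haS, hf a haS]) hw
      have hk : 1 ≤ k := by
        by_contra hk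
        have hall : ∀ a ∈ S, a ∈ I := by
          intro a ha
          by_contra haI
          have := hc1 a (Finset.mem_sdiff.2 ⟨ha, haI⟩)
          omega
        exact hind u (hall u hu) v (hall v hv) huv
      refine ⟨fun a => if a ∈ I then k - 1 else c a, ?_, ?_⟩
      · intro a ha
        by_cases haI : a ∈ I
        · simp only [haI, if_true]; omega
        · have := hc1 a (Finset.mem_sdiff.2 ⟨ha, haI⟩)
          simp only [haI, if_false]; omega
      · intro a ha b hb hab
        by_cases haI : a ∈ I <;> by_cases hbI : b ∈ I
        · exact (hind a haI b hbI hab).elim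
        · have := hc1 b (Finset.mem_sdiff.2 ⟨hb, hbI⟩)
          simp only [haI, hbI, if_true, if_false]; omega
        · have := hc1 a (Finset.mem_sdiff.2 ⟨ha, haI⟩)
          simp only [haI, hbI, if_true, if_false]; omega
        · simp only [haI, hbI, if_false]
          exact hc2 a (Finset.mem_sdiff.2 ⟨ha, haI⟩) b (Finset.mem_sdiff.2 ⟨hb, hbI⟩) hab

theorem colorable_of_online {G : SimpleGraph V} {k : ℕ}
    (h : OnlineChoosable G Finset.univ (fun _ => k)) : G.Colorable k := by
  obtain ⟨n, hn⟩ := h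
  obtain ⟨c, hc1, hc2⟩ := colorable_of_aux n k _ _ (by simp) hn
  exact ⟨SimpleGraph.Coloring.mk (fun v => (⟨c v, hc1 v (Finset.mem_univ v)⟩ : Fin k)) (by
    intro u v huv hh
    exact hc2 u (Finset.mem_univ u) v (Finset.mem_univ v) huv (by simpa using hh))⟩

theorem chrom_arith (r a b k : ℕ) (ha : 1 ≤ a) (hab : a + b ≤ r) (hr : r * r ≤ k) :
    a * (r - 1) + b + 1 ≤ k := by
  obtain ⟨q, rfl⟩ : ∃ q, r = q + 1 := ⟨r - 1, by omega⟩
  simp only [Nat.add_sub_cancel]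
  rcases q with _ | q
  · have : a = 1 := by omega
    subst this
    omega
  · have h1 : a * q ≤ (q + 2) * q := Nat.mul_le_mul_right _ (by omega)
    nlinarith

theorem online_of_chrom (G : SimpleGraph V) (k : ℕ) (hcol : G.Colorable k)
    (hmin : ∀ m, G.Colorable m → k ≤ m)
    (hcard : ∃ r, Fintype.card V = k + r ∧ r * r ≤ k) :
    OnlineChoosable G Finset.univ (fun _ => k) := by
  obtain ⟨r, hr, hrk⟩ := hcard
  obtain ⟨C⟩ := hcol
  have hsurj : ∀ c : Fin k, ∃ v, C v = c := by
    intro c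
    by_contra hc
    push Not at hc
    have h1 : G.Colorable (Fintype.card {d : Fin k // d ≠ c}) :=
      (SimpleGraph.Coloring.mk (fun v => (⟨C v, hc v⟩ : {d : Fin k // d ≠ c})) (by
        intro u v huv hh
        exact C.valid huv (by simpa using hh))).colorable
    have h2 := hmin _ h1
    have h3 : Fintype.card {d : Fin k // d ≠ c} < Fintype.card (Fin k) :=
      Fintype.card_subtype_lt (x := c) (by simp)
    rw [Fintype.card_fin] at h3
    omega
  let P : Fin k → Finset V := fun c => Finset.univ.filter (fun v => C v = c)
  let B : Finset (Fin k) := Finset.univ.filter (fun c => 2 ≤ (P c).card)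
  have hP1 : ∀ c, 1 ≤ (P c).card := by
    intro c
    obtain ⟨v, hv⟩ := hsurj c
    exact Finset.card_pos.2 ⟨v, by simp [P, hv]⟩
  have hsum : ∑ c, (P c).card = k + r := by
    rw [← hr, ← Finset.card_univ]
    exact (Finset.card_eq_sum_card_fiberwise (f := C) (s := Finset.univ) (t := Finset.univ)
      (by simp)).symm
  have hBk : B.card ≤ k := by simpa using Finset.card_le_univ B
  have huniq : ∀ u v : V, C u = C v → C u ∉ B → u = v := by
    intro u v huv huB
    by_contra hne
    apply huB
    simp only [B, Finset.mem_filter, Finset.mem_univ, true_and]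
    have : ({u, v} : Finset V) ⊆ P (C u) := by
      intro a ha
      simp only [Finset.mem_insert, Finset.mem_singleton] at ha
      rcases ha with rfl | rfl <;> simp [P, huv]
    have h2 := Finset.card_le_card this
    rwa [Finset.card_pair hne] at h2
  have hinv : PInv (fun v => C v) Finset.univ (fun _ => k) B := by
    refine ⟨fun u _ v _ => huniq u v, ?_, ?_⟩
    · intro t
      by_cases ht : k ≤ B.card + t
      · have h1 : (Finset.univ.filter (fun v => C v ∉ B ∧ k ≤ B.card + t)).card ≤ Bᶜ.card := by
          apply Finset.card_le_card_of_injOn (fun v => C v)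
          · intro v hv
            simp only [Finset.coe_filter, Set.mem_ofPred_eq] at hv
            simpa using hv.2.1
          · intro u hu v hv huv
            simp only [Finset.coe_filter, Set.mem_ofPred_eq] at hu
            exact huniq u v huv hu.2.1
        have h2 := Finset.card_compl B
        rw [Fintype.card_fin] at h2
        omega
      · simp [ht]
    · intro X _ hXne hXm
      rw [Finset.sum_const, smul_eq_mul, Finset.card_univ, hr]
      have h4 := Finset.card_pos.2 hXne
      obtain ⟨a, ha⟩ : ∃ a, X.card = a + 1 := ⟨X.card - 1, by omega⟩
      rw [ha]
      simp only [Nat.add_sub_cancel]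
      rcases Nat.eq_zero_or_pos a with h0 | hapos
      · subst h0; simpa using hBk
      obtain ⟨x, hx⟩ := hXne
      have hXP : X ⊆ P (C x) := by
        intro y hy
        simp only [P, Finset.mem_filter, Finset.mem_univ, true_and]
        exact hXm y hy x hx
      have hXPc := Finset.card_le_card hXP
      have hxB : C x ∈ B := by
        simp only [B, Finset.mem_filter, Finset.mem_univ, true_and]
        omega
      have hBpos := Finset.card_pos.2 ⟨_, hxB⟩
      have hle : ∑ c : Fin k, (1 + (if c ∈ B then 1 else 0) + (if c = C x then a - 1 else 0))
          ≤ ∑ c, (P c).card := by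
        apply Finset.sum_le_sum
        intro c _
        by_cases hcx : c = C x
        · subst hcx
          simp only [hxB, if_true]
          omega
        · simp only [hcx, if_false]
          have := hP1 c
          split_ifs with hcB
          · simp only [B, Finset.mem_filter, Finset.mem_univ, true_and] at hcB
            omega
          · omega
      rw [hsum, Finset.sum_add_distrib, Finset.sum_add_distrib] at hle
      simp at hle
      have key := chrom_arith r a (B.card - 1) k hapos (by omega) hrk
      have hrpos : 1 ≤ r := by omega
      have e1 : a * (k + r - 1) = a * k + a * (r - 1) := by
        rw [← Nat.mul_add]; congr 1; omega
      rw [e1, Nat.succ_mul]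
      omega
  have hwin := PInv.win (G := G) (fun v => C v) (fun u v huv => C.valid huv) _ _ _ B rfl hinv
  exact ⟨_, PWin.aux _ _ _ hwin⟩

/-- If `|V(G)| ≤ χ(G) + √(χ(G))`, then the on-line choice number of `G` equals its
chromatic number. -/
theorem online_chromatic_choosable_of_card_le_chrom_add_sqrt (G : SimpleGraph V)
    (h : (Fintype.card V : ℝ) ≤ (chromNum G : ℝ) + Real.sqrt (chromNum G)) :
    chromNum G = onlineChoiceNumber G := by
  have hne : {n | G.Colorable n}.Nonempty := ⟨_, G.colorable_of_fintype⟩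
  have hcol : G.Colorable (chromNum G) := Nat.sInf_mem hne
  have hmin : ∀ m, G.Colorable m → chromNum G ≤ m := fun m hm => Nat.sInf_le hm
  have hle : chromNum G ≤ Fintype.card V := hmin _ G.colorable_of_fintype
  obtain ⟨r, hr⟩ := Nat.exists_eq_add_of_le hle
  have hrr : r * r ≤ chromNum G := by
    rw [hr] at h
    push_cast at h
    have h1 : (r : ℝ) ≤ Real.sqrt (chromNum G) := by linarith
    have h2 := (Real.le_sqrt (Nat.cast_nonneg r) (Nat.cast_nonneg (chromNum G))).1 h1
    have h3 : ((r * r : ℕ) : ℝ) ≤ (chromNum G : ℝ) := by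
      push_cast; nlinarith
    exact_mod_cast h3
  have hon := online_of_chrom G (chromNum G) hcol hmin ⟨r, hr, hrr⟩
  apply le_antisymm
  · apply hmin
    apply colorable_of_online
    exact Nat.sInf_mem (s := {k | OnlineChoosable G Finset.univ (fun _ => k)}) ⟨_, hon⟩
  · exact Nat.sInf_le hon
end

section
/- If G is a finite simple graph with independence number at most 3 and |V(G)| ≤ 2χ(G) + 1, then χ(G) = ch(G), i.e., the choice number of G equals its chromatic number. -/
variable {V : Type} [Fintype V] [DecidableEq V]

/-- `G` is `f`-choosable: for every list assignment `L` with `|L(v)| = f(v)` for all `v`,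
there is a proper colouring of `G` choosing each colour from the corresponding list. -/
def Choosable (G : SimpleGraph V) (f : V → ℕ) : Prop :=
  ∀ L : V → Finset ℕ, (∀ v, (L v).card = f v) →
    ∃ c : V → ℕ, (∀ v, c v ∈ L v) ∧ ∀ u v, G.Adj u v → c u ≠ c v

/-- The choice number: least `k` such that `G` is `k`-choosable. -/
noncomputable def choiceNumber (G : SimpleGraph V) : ℕ :=
  sInf {k | Choosable G fun _ => k}

namespace Ohba

/-- List-colourability of the complete multipartite graph with the given parts. -/
def Col {W : Type} (L : W → Finset ℕ) (Ps : List (List W)) : Prop :=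
  ∃ col : W → ℕ, (∀ p ∈ Ps, ∀ v ∈ p, col v ∈ L v) ∧
    Ps.Pairwise (fun p q => ∀ u ∈ p, ∀ v ∈ q, col u ≠ col v)

theorem Col.perm {W : Type} {L : W → Finset ℕ} {Ps Qs : List (List W)}
    (h : Col L Ps) (hp : Ps.Perm Qs) : Col L Qs := by
  obtain ⟨col, h1, h2⟩ := h
  refine ⟨col, fun p hpq => h1 p (hp.mem_iff.2 hpq), ?_⟩
  refine (hp.pairwise_iff ?_).1 h2
  intro x y hxy u hu v hv
  exact (hxy v hv u hu).symm

theorem Col.sub {W : Type} {L : W → Finset ℕ} {p q : List W} {Q : List (List W)}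
    (h : Col L (p :: Q)) (hq : q ⊆ p) : Col L (q :: Q) := by
  obtain ⟨col, h1, h2⟩ := h
  refine ⟨col, ?_, ?_⟩
  · intro r hr v hv
    rcases List.mem_cons.1 hr with rfl | hr
    · exact h1 p (by simp) v (hq hv)
    · exact h1 r (by simp [hr]) v hv
  · rw [List.pairwise_cons] at h2 ⊢
    exact ⟨fun r hr u hu => h2.1 r hr u (hq hu), h2.2⟩

theorem Col.nil {W : Type} {L : W → Finset ℕ} {Q : List (List W)}
    (h : Col L Q) : Col L ([] :: Q) := by
  obtain ⟨col, h1, h2⟩ := h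
  refine ⟨col, ?_, ?_⟩
  · intro r hr v hv
    rcases List.mem_cons.1 hr with rfl | hr
    · simp at hv
    · exact h1 r hr v hv
  · rw [List.pairwise_cons]
    exact ⟨fun r hr u hu => by simp at hu, h2⟩

theorem Col.mono {W : Type} {L M : W → Finset ℕ} {Q : List (List W)}
    (h : Col L Q) (hLM : ∀ v, L v ⊆ M v) : Col M Q := by
  obtain ⟨col, h1, h2⟩ := h
  exact ⟨col, fun p hp v hv => hLM v (h1 p hp v hv), h2⟩

/-- Colour the vertices of `p` outside `q` with `c`. -/
theorem Col.move {W : Type} [DecidableEq W] {L : W → Finset ℕ} {p q : List W}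
    {Q : List (List W)} {c : ℕ}
    (h : Col (fun v => (L v).erase c) (q :: Q)) (hnd : (p ++ Q.flatten).Nodup)
    (hq : q ⊆ p) (hc : ∀ v ∈ p, v ∉ q → c ∈ L v) : Col L (p :: Q) := by
  obtain ⟨col, h1, h2⟩ := h
  have hdis : ∀ r ∈ Q, ∀ v ∈ r, v ∉ p := by
    intro r hr v hv hvp
    have := List.disjoint_of_nodup_append hnd
    exact this hvp (List.mem_flatten.2 ⟨r, hr, hv⟩)
  refine ⟨fun v => if v ∈ p ∧ v ∉ q then c else col v, ?_, ?_⟩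
  · intro r hr v hv
    rcases List.mem_cons.1 hr with rfl | hr
    · by_cases hvq : v ∈ q
      · simpa [hvq] using Finset.mem_of_mem_erase (h1 q (by simp) v hvq)
      · simpa [hvq, hv] using hc v hv hvq
    · have := hdis r hr v hv
      simpa [this] using Finset.mem_of_mem_erase (h1 r (by simp [hr]) v hv)
  · rw [List.pairwise_cons] at h2 ⊢
    constructor
    · intro r hr u hu v hv
      have hvp := hdis r hr v hv
      by_cases huq : u ∈ q
      · simpa [huq, hvp] using h2.1 r hr u huq v hv
      · have := Finset.ne_of_mem_erase (h1 r (by simp [hr]) v hv)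
        simpa [huq, hu, hvp] using this.symm
    · refine List.Pairwise.imp_of_mem ?_ h2.2
      intro r s hr hs hrs u hu v hv
      have h3 := hdis r hr u hu
      have h4 := hdis s hs v hv
      simpa [h3, h4] using hrs u hu v hv

theorem Col.merge {W : Type} [DecidableEq W] {L : W → Finset ℕ} {y z : W}
    {Q : List (List W)}
    (h : Col (Function.update L y (L y ∩ L z)) ([y] :: Q))
    (hnd : ([y, z] ++ Q.flatten).Nodup) : Col L ([y, z] :: Q) := by
  obtain ⟨col, h1, h2⟩ := h
  have hdis : ∀ r ∈ Q, ∀ v ∈ r, v ≠ y ∧ v ≠ z := by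
    intro r hr v hv
    have := List.disjoint_of_nodup_append hnd
    constructor
    · rintro rfl
      exact this (by simp) (List.mem_flatten.2 ⟨r, hr, hv⟩)
    · rintro rfl
      exact this (by simp) (List.mem_flatten.2 ⟨r, hr, hv⟩)
  have hyz : y ≠ z := by
    intro h; simp [h] at hnd
  have hy := h1 [y] (by simp) y (by simp)
  simp at hy
  rw [List.pairwise_cons] at h2
  refine ⟨fun v => if v = z then col y else col v, ?_, ?_⟩
  · intro r hr v hv
    rcases List.mem_cons.1 hr with rfl | hr
    · simp at hv
      rcases hv with rfl | rfl
      · simpa [hyz] using hy.1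
      · simpa using hy.2
    · have h3 := hdis r hr v hv
      have := h1 r (by simp [hr]) v hv
      simpa [h3.1, h3.2] using this
  · rw [List.pairwise_cons]
    constructor
    · intro r hr u hu v hv
      have h3 := hdis r hr v hv
      have := h2.1 r hr y (by simp) v hv
      simp at hu
      rcases hu with rfl | rfl
      · simpa [hyz, h3.2] using this
      · simpa [h3.2] using this
    · refine List.Pairwise.imp_of_mem ?_ h2.2
      intro r s hr hs hrs u hu v hv
      have h3 := hdis r hr u hu
      have h4 := hdis s hs v hv
      simpa [h3, h4] using hrs u hu v hv

theorem Col.greedy {W : Type} [DecidableEq W] {L : W → Finset ℕ} {v : W}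
    {Q : List (List W)} (h : Col L Q) (hnd : (v :: Q.flatten).Nodup)
    (hv : Q.flatten.length + 1 ≤ (L v).card) : Col L ([v] :: Q) := by
  obtain ⟨col, h1, h2⟩ := h
  have : ∃ c ∈ L v, c ∉ (Q.flatten.map col).toFinset := by
    apply Finset.exists_mem_notMem_of_card_lt_card
    calc _ ≤ (Q.flatten.map col).length := List.toFinset_card_le _
      _ < _ := by rw [List.length_map]; omega
  obtain ⟨c, hc, hc2⟩ := this
  have hdis : ∀ r ∈ Q, ∀ u ∈ r, u ≠ v := by
    rintro r hr u hu rfl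
    rw [List.nodup_cons] at hnd
    exact hnd.1 (List.mem_flatten.2 ⟨r, hr, hu⟩)
  refine ⟨fun u => if u = v then c else col u, ?_, ?_⟩
  · intro r hr u hu
    rcases List.mem_cons.1 hr with rfl | hr
    · simp at hu; subst hu; simpa using hc
    · simpa [hdis r hr u hu] using h1 r hr u hu
  · rw [List.pairwise_cons]
    constructor
    · intro r hr u hu w hw
      simp at hu; subst hu
      have h3 := hdis r hr w hw
      simp only [if_true, h3, if_false]
      rintro rfl
      apply hc2
      simp only [List.mem_toFinset, List.mem_map]
      exact ⟨w, List.mem_flatten.2 ⟨r, hr, hw⟩, rfl⟩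
    · refine List.Pairwise.imp_of_mem ?_ h2
      intro r s hr hs hrs u hu w hw
      simpa [hdis r hr u hu, hdis s hs w hw] using hrs u hu w hw

theorem hallF {W : Type} [DecidableEq W] (F : Finset W) (M : W → Finset ℕ)
    (h : ∀ T ⊆ F, T.card ≤ (T.biUnion M).card) :
    ∃ g : W → ℕ, (∀ v ∈ F, g v ∈ M v) ∧ ∀ u ∈ F, ∀ v ∈ F, g u = g v → u = v := by
  have := (Finset.all_card_le_biUnion_card_iff_exists_injective
    (fun v : {v // v ∈ F} => M v.1)).1 ?_
  · obtain ⟨f, hf, hf2⟩ := this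
    refine ⟨fun v => if hv : v ∈ F then f ⟨v, hv⟩ else 0, ?_, ?_⟩
    · intro v hv
      simpa [hv] using hf2 ⟨v, hv⟩
    · intro u hu v hv huv
      simp only [hu, hv, dif_pos] at huv
      simpa using hf huv
  · intro s
    have h1 := h (s.map (Function.Embedding.subtype _)) (by
      intro x hx
      simp at hx
      exact hx.1)
    rw [Finset.card_map, Finset.map_eq_image, Finset.image_biUnion] at h1
    exact h1

/-- Small pot lemma. -/
theorem Col.smallPot {W : Type} [DecidableEq W] {L : W → Finset ℕ}
    {Ps : List (List W)} (hnd : Ps.flatten.Nodup) (n : ℕ) (hn : Ps.flatten.length = n + 1)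
    (H : ∀ L' : W → Finset ℕ, (∀ v ∈ Ps.flatten, (L' v).card = min (L v).card n) →
      (∃ Y : Finset ℕ, Y.card = n ∧ ∀ v ∈ Ps.flatten, L' v ⊆ Y) → Col L' Ps) :
    Col L Ps := by
  classical
  set F := Ps.flatten.toFinset with hF
  have hFc : F.card = n + 1 := by rw [hF, List.toFinset_card_of_nodup hnd, hn]
  have hdisj := (List.nodup_flatten.1 hnd).2
  by_cases hall : ∀ T ⊆ F, T.card ≤ (T.biUnion L).card
  · obtain ⟨g, hg1, hg2⟩ := hallF F L hall
    refine ⟨g, ?_, ?_⟩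
    · intro p hp v hv
      exact hg1 v (by simp only [hF, List.mem_toFinset]; exact List.mem_flatten.2 ⟨p, hp, hv⟩)
    · refine List.Pairwise.imp_of_mem ?_ hdisj
      intro p q hp hq hpq u hu v hv huv
      have := hg2 u (by simp only [hF, List.mem_toFinset]; exact List.mem_flatten.2 ⟨p, hp, hu⟩)
        v (by simp only [hF, List.mem_toFinset]; exact List.mem_flatten.2 ⟨q, hq, hv⟩) huv
      subst this
      exact hpq hu hv
  · push Not at hall
    obtain ⟨T0, hT0, hT0c⟩ := hall
    have hne : (F.powerset.filter (fun T => (T.biUnion L).card < T.card)).Nonempty :=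
      ⟨T0, by simp [hT0, hT0c]⟩
    obtain ⟨S, hS, hSmax⟩ := Finset.exists_max_image _ Finset.card hne
    simp only [Finset.mem_filter, Finset.mem_powerset] at hS hSmax
    obtain ⟨hSF, hSc⟩ := hS
    have hall2 : ∀ T ⊆ F \ S, T.card ≤ (T.biUnion (fun v => L v \ S.biUnion L)).card := by
      intro T hT
      by_contra hlt
      push Not at hlt
      have hd : Disjoint S T := by
        rw [Finset.disjoint_left]
        intro x hx hx2
        exact (Finset.mem_sdiff.1 (hT hx2)).2 hx
      have hun : ((S ∪ T).biUnion L).card < (S ∪ T).card := by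
        rw [Finset.card_union_of_disjoint hd]
        have : (S ∪ T).biUnion L ⊆ S.biUnion L ∪ T.biUnion (fun v => L v \ S.biUnion L) := by
          intro x hx
          by_cases hx2 : x ∈ S.biUnion L
          · exact Finset.mem_union_left _ hx2
          · apply Finset.mem_union_right
            rw [Finset.mem_biUnion] at hx ⊢
            obtain ⟨a, ha, hxa⟩ := hx
            rcases Finset.mem_union.1 ha with ha | ha
            · exact absurd (Finset.mem_biUnion.2 ⟨a, ha, hxa⟩) hx2
            · exact ⟨a, ha, Finset.mem_sdiff.2 ⟨hxa, hx2⟩⟩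
        have h1 := Finset.card_le_card this
        have h2 := Finset.card_union_le (S.biUnion L) (T.biUnion (fun v => L v \ S.biUnion L))
        omega
      have := hSmax (S ∪ T) ⟨Finset.union_subset hSF (hT.trans Finset.sdiff_subset), hun⟩
      rw [Finset.card_union_of_disjoint hd] at this
      omega
    obtain ⟨g, hg1, hg2⟩ := hallF _ _ hall2
    have hSn : (S.biUnion L).card ≤ n := by
      have := Finset.card_le_card hSF
      omega
    obtain ⟨Y, hY1, hY2⟩ := Infinite.exists_superset_card_eq (S.biUnion L) n hSn
    have hsub : ∀ v, ∃ X ⊆ Y, X.card = min (L v).card n := by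
      intro v
      exact Finset.exists_subset_card_eq (by omega)
    choose X hX1 hX2 using hsub
    have hLY : ∀ v ∈ S, L v ⊆ Y := fun v hv => (Finset.subset_biUnion_of_mem L hv).trans hY1
    have hM1 : ∀ v ∈ Ps.flatten, ((fun v => if v ∈ S then L v else X v) v).card = min (L v).card n := by
      intro v _
      by_cases hvS : v ∈ S
      · simp only [hvS, if_true]
        have := Finset.card_le_card (hLY v hvS)
        omega
      · simp only [hvS, if_false]
        exact hX2 v
    have hM2 : ∀ v ∈ Ps.flatten, (fun v => if v ∈ S then L v else X v) v ⊆ Y := by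
      intro v _
      by_cases hvS : v ∈ S
      · simpa only [hvS, if_true] using hLY v hvS
      · simpa only [hvS, if_false] using hX1 v
    obtain ⟨col, hc1, hc2⟩ := H (fun v => if v ∈ S then L v else X v) hM1 ⟨Y, hY2, hM2⟩
    refine ⟨fun v => if v ∈ S then col v else g v, ?_, ?_⟩
    · intro p hp v hv
      by_cases hvS : v ∈ S
      · simpa [hvS] using hc1 p hp v hv
      · have hvF : v ∈ F := by
          simp only [hF, List.mem_toFinset]; exact List.mem_flatten.2 ⟨p, hp, hv⟩
        have := (Finset.mem_sdiff.1 (hg1 v (Finset.mem_sdiff.2 ⟨hvF, hvS⟩))).1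
        simpa [hvS] using this
    · have := hdisj.and hc2
      refine List.Pairwise.imp_of_mem ?_ this
      rintro p q hp hq ⟨hpq, hpq2⟩ u hu v hv
      have huF : u ∈ F := by
        simp only [hF, List.mem_toFinset]; exact List.mem_flatten.2 ⟨p, hp, hu⟩
      have hvF : v ∈ F := by
        simp only [hF, List.mem_toFinset]; exact List.mem_flatten.2 ⟨q, hq, hv⟩
      have key : ∀ w ∈ F, w ∉ S → g w ∉ S.biUnion L := fun w hw hwS =>
        (Finset.mem_sdiff.1 (hg1 w (Finset.mem_sdiff.2 ⟨hw, hwS⟩))).2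
      have key2 : ∀ r ∈ Ps, ∀ w ∈ r, w ∈ S → col w ∈ S.biUnion L := by
        intro r hr w hw hwS
        have := hc1 r hr w hw
        simp only [hwS, if_true] at this
        exact Finset.mem_biUnion.2 ⟨w, hwS, this⟩
      by_cases huS : u ∈ S <;> by_cases hvS : v ∈ S
      · simpa [huS, hvS] using hpq2 u hu v hv
      · simp only [huS, hvS, if_true, if_false]
        intro h
        exact key v hvF hvS (h ▸ key2 p hp u hu huS)
      · simp only [huS, hvS, if_true, if_false]
        intro h
        exact key u huF huS (h ▸ key2 q hq v hv hvS)
      · simp only [huS, hvS, if_false]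
        intro h
        have := hg2 u (Finset.mem_sdiff.2 ⟨huF, huS⟩) v (Finset.mem_sdiff.2 ⟨hvF, hvS⟩) h
        subst this
        exact hpq hu hv

def tl {W : Type} (t : W × W × W) : List W := [t.1, t.2.1, t.2.2]

def parts {W : Type} (A : List W) (B : List (W × W)) (C : List (W × W × W)) (S : List W) :
    List (List W) :=
  A.map (fun a => [a]) ++ (S.map (fun a => [a]) ++ (B.map (fun b => [b.1, b.2]) ++ C.map tl))

theorem parts_A {W : Type} (l1 l2 : List W) (a : W) (B : List (W × W)) (C : List (W × W × W))
    (S : List W) : (parts (l1 ++ a :: l2) B C S).Perm ([a] :: parts (l1 ++ l2) B C S) := by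
  simp only [parts, List.map_append, List.map_cons, List.append_assoc, List.cons_append]
  exact List.perm_middle

theorem parts_S {W : Type} (A l1 l2 : List W) (a : W) (B : List (W × W)) (C : List (W × W × W)) :
    (parts A B C (l1 ++ a :: l2)).Perm ([a] :: parts A B C (l1 ++ l2)) := by
  simp only [parts, List.map_append, List.map_cons, List.append_assoc, List.cons_append]
  refine (List.Perm.append_left _ List.perm_middle).trans List.perm_middle

theorem parts_B {W : Type} (A : List W) (b : W × W) (B : List (W × W)) (C : List (W × W × W))
    (S : List W) : (parts A (b :: B) C S).Perm ([b.1, b.2] :: parts A B C S) := by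
  simp only [parts, List.map_cons, List.cons_append]
  refine (List.Perm.append_left _ List.perm_middle).trans List.perm_middle

theorem parts_C {W : Type} (A : List W) (t : W × W × W) (B : List (W × W)) (C : List (W × W × W))
    (S : List W) : (parts A B (t :: C) S).Perm (tl t :: parts A B C S) := by
  simp only [parts, List.map_cons]
  refine (List.Perm.append_left _ (List.Perm.append_left _ List.perm_middle)).trans ?_
  refine (List.Perm.append_left _ List.perm_middle).trans List.perm_middle

theorem parts_permB {W : Type} (A : List W) {B B' : List (W × W)} (C : List (W × W × W))
    (S : List W) (h : B.Perm B') : (parts A B C S).Perm (parts A B' C S) :=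
  List.Perm.append_left _ (List.Perm.append_left _ (List.Perm.append_right _ (h.map _)))

theorem parts_permC {W : Type} (A : List W) (B : List (W × W)) {C C' : List (W × W × W)}
    (S : List W) (h : C.Perm C') : (parts A B C S).Perm (parts A B C' S) :=
  List.Perm.append_left _ (List.Perm.append_left _ (List.Perm.append_left _ (h.map _)))

theorem parts_len {W : Type} (A : List W) (B : List (W × W)) (C : List (W × W × W))
    (S : List W) : (parts A B C S).flatten.length =
      3 * C.length + 2 * B.length + A.length + S.length := by
  have hs : ∀ l : List W, (l.map (fun a => [a])).flatten.length = l.length := by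
    intro l; induction l with
    | nil => rfl
    | cons a l ih => simp only [List.map_cons, List.flatten_cons, List.length_append, ih]; simp; omega
  have hb : ∀ l : List (W × W), (l.map (fun b => [b.1, b.2])).flatten.length = 2 * l.length := by
    intro l; induction l with
    | nil => rfl
    | cons a l ih => simp only [List.map_cons, List.flatten_cons, List.length_append, ih]; simp; omega
  have hc : ∀ l : List (W × W × W), (l.map tl).flatten.length = 3 * l.length := by
    intro l; induction l with
    | nil => rfl
    | cons a l ih =>
      simp only [List.map_cons, List.flatten_cons, List.length_append, ih]; simp [tl]; omega
  simp only [parts, List.flatten_append, List.length_append, hs, hb, hc]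
  omega

/-- `i`-th element (from 1) of the list has `f`-value at least `b + i`. -/
def Ord {W : Type} (f : W → ℕ) : ℕ → List W → Prop
  | _, [] => True
  | b, a :: l => b + 1 ≤ f a ∧ Ord f (b + 1) l

theorem Ord.app {W : Type} {f : W → ℕ} {l m : List W} : ∀ {b : ℕ},
    Ord f b (l ++ m) ↔ Ord f b l ∧ Ord f (b + l.length) m := by
  induction l with
  | nil => simp [Ord]
  | cons a l ih =>
    intro b
    simp only [List.cons_append, Ord, ih, List.length_cons, and_assoc]
    rw [show b + 1 + l.length = b + (l.length + 1) by omega]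

theorem Ord.imp {W : Type} {f g : W → ℕ} {l : List W} : ∀ {b b' : ℕ}, Ord f b l →
    (∀ v ∈ l, ∀ m, b + m ≤ f v → b' + m ≤ g v) → Ord g b' l := by
  induction l with
  | nil => intros; trivial
  | cons a l ih =>
    intro b b' h H
    refine ⟨H a (by simp) 1 h.1, ih h.2 ?_⟩
    intro v hv m hm
    have := H v (by simp [hv]) (m + 1) (by omega)
    omega

theorem Ord.alpha {W : Type} {L : W → Finset ℕ} {c : ℕ} {l : List W} : ∀ {b : ℕ},
    Ord (fun v => (L v).card) b l → (∃ v ∈ l, c ∈ L v) →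
    ∃ l1 a l2, l = l1 ++ a :: l2 ∧ c ∈ L a ∧
      Ord (fun v => ((L v).erase c).card) b (l1 ++ l2) := by
  induction l with
  | nil => simp
  | cons a l ih =>
    intro b h hex
    by_cases ha : c ∈ L a
    · refine ⟨[], a, l, rfl, ha, ?_⟩
      refine Ord.imp h.2 ?_
      intro v _ m hm
      have := Finset.pred_card_le_card_erase (s := L v) (a := c)
      omega
    · obtain ⟨v, hv, hcv⟩ := hex
      have hv' : v ∈ l := by
        rcases List.mem_cons.1 hv with rfl | hv
        · exact absurd hcv ha
        · exact hv
      obtain ⟨l1, a', l2, rfl, h1, h2⟩ := ih h.2 ⟨v, hv', hcv⟩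
      refine ⟨a :: l1, a', l2, rfl, h1, ?_, h2⟩
      show b + 1 ≤ ((L a).erase c).card
      rw [Finset.erase_eq_of_notMem ha]
      exact h.1

structure Good {W : Type} (f : W → ℕ) (A : List W) (B : List (W × W)) (C : List (W × W × W))
    (S : List W) : Prop where
  h1 : Ord f (B.length + C.length) A
  h2 : ∀ x y, (x, y) ∈ B → B.length + C.length ≤ f x ∧ B.length + C.length ≤ f y
  h3 : ∀ x y, (x, y) ∈ B → 3 * C.length + 2 * B.length + A.length + S.length ≤ f x + f y
  h4 : ∀ x y z, (x, y, z) ∈ C →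
    B.length + C.length ≤ f x ∧ B.length + C.length ≤ f y ∧ B.length + C.length ≤ f z
  h5 : ∀ x y z, (x, y, z) ∈ C → 2 * C.length + 2 * B.length + A.length ≤ f x + f y ∧
    2 * C.length + 2 * B.length + A.length ≤ f x + f z ∧
    2 * C.length + 2 * B.length + A.length ≤ f y + f z
  h6 : ∀ x y z, (x, y, z) ∈ C →
    4 * C.length + 3 * B.length + 2 * A.length + S.length ≤ f x + f y + f z + 1
  h7 : Ord f (2 * C.length + 2 * B.length + A.length) S

theorem Good.permB {W : Type} {f : W → ℕ} {A : List W} {B B' : List (W × W)}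
    {C : List (W × W × W)} {S : List W} (h : Good f A B C S) (hp : B.Perm B') :
    Good f A B' C S := by
  have hl := hp.length_eq
  constructor
  · rw [← hl]; exact h.h1
  · rw [← hl]; intro x y hx; exact h.h2 x y (hp.mem_iff.2 hx)
  · rw [← hl]; intro x y hx; exact h.h3 x y (hp.mem_iff.2 hx)
  · rw [← hl]; exact h.h4
  · rw [← hl]; exact h.h5
  · rw [← hl]; exact h.h6
  · rw [← hl]; exact h.h7

/-- Remove a monochromatic triple. -/
theorem Good.full {W : Type} {f g : W → ℕ} {A : List W} {B : List (W × W)} {t : W × W × W}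
    {C : List (W × W × W)} {S : List W} (h : Good f A B (t :: C) S)
    (hg : ∀ v, f v ≤ g v + 1) : Good g A B C S := by
  obtain ⟨h1, h2, h3, h4, h5, h6, h7⟩ := h
  simp only [List.length_cons] at *
  constructor
  · exact h1.imp (fun v _ m hm => by have := hg v; omega)
  · intro x y hx; have := h2 x y hx; have := hg x; have := hg y; omega
  · intro x y hx; have := h3 x y hx; have := hg x; have := hg y; omega
  · intro x y z hx; have := h4 x y z (by simp [hx]); have := hg x; have := hg y; have := hg z; omega
  · intro x y z hx; have := h5 x y z (by simp [hx]); have := hg x; have := hg y; have := hg z; omega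
  · intro x y z hx; have := h6 x y z (by simp [hx]); have := hg x; have := hg y; have := hg z; omega
  · exact h7.imp (fun v _ m hm => by have := hg v; omega)

/-- Remove a monochromatic double. -/
theorem Good.double {W : Type} {f g : W → ℕ} {A : List W} {B : List (W × W)} {b : W × W}
    {C : List (W × W × W)} {S : List W} (h : Good f A (b :: B) C S)
    (hg : ∀ v, f v ≤ g v + 1) : Good g A B C S := by
  obtain ⟨h1, h2, h3, h4, h5, h6, h7⟩ := h
  simp only [List.length_cons] at *
  constructor
  · exact h1.imp (fun v _ m hm => by have := hg v; omega)
  · intro x y hx; have := h2 x y (by simp [hx]); have := hg x; have := hg y; omega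
  · intro x y hx; have := h3 x y (by simp [hx]); have := hg x; have := hg y; omega
  · intro x y z hx; have := h4 x y z hx; have := hg x; have := hg y; have := hg z; omega
  · intro x y z hx; have := h5 x y z hx; have := hg x; have := hg y; have := hg z; omega
  · intro x y z hx; have := h6 x y z hx; have := hg x; have := hg y; have := hg z; omega
  · exact h7.imp (fun v _ m hm => by have := hg v; omega)

theorem Good.zeta {W : Type} {f g : W → ℕ} {A : List W} {x y z : W}
    {C : List (W × W × W)} {S : List W} (h : Good f A [] ((x, y, z) :: C) S)
    (hg : ∀ v, f v ≤ g v + 1) (hz : 2 * C.length + A.length + 1 ≤ g z) :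
    Good g A [] C (z :: S) := by
  obtain ⟨h1, h2, h3, h4, h5, h6, h7⟩ := h
  simp only [List.length_cons, List.length_nil] at *
  constructor
  · exact h1.imp (fun v _ m hm => by have := hg v; simp only [List.length_nil]; omega)
  · intro x y hx; simp at hx
  · intro x y hx; simp at hx
  · intro x y z hx; have := h4 x y z (by simp [hx]); have := hg x; have := hg y; have := hg z
    simp only [List.length_nil]; omega
  · intro x y z hx; have := h5 x y z (by simp [hx]); have := hg x; have := hg y; have := hg z
    simp only [List.length_nil]; omega
  · intro x y z hx; have := h6 x y z (by simp [hx]); have := hg x; have := hg y; have := hg z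
    simp only [List.length_nil, List.length_cons]; omega
  · refine ⟨by simp only [List.length_nil]; omega, ?_⟩
    exact h7.imp (fun v _ m hm => by have := hg v; simp only [List.length_nil]; omega)

theorem Good.beta {W : Type} {f g : W → ℕ} {A : List W} {t : W × W × W} {w : W}
    {C : List (W × W × W)} {S : List W} (h : Good f A [] (t :: C) S)
    (hg : ∀ v ∈ (parts A [] C S).flatten, f v ≤ g v + 1)
    (hw : C.length + 1 + A.length ≤ g w)
    (h5' : ∀ x y z, (x, y, z) ∈ C → 2 * C.length + A.length + 1 ≤ g x + g y ∧
      2 * C.length + A.length + 1 ≤ g x + g z ∧ 2 * C.length + A.length + 1 ≤ g y + g z)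
    (h6' : ∀ x y z, (x, y, z) ∈ C → f x + f y + f z ≤ g x + g y + g z + 2) :
    Good g (A ++ [w]) [] C S := by
  obtain ⟨h1, h2, h3, h4, h5, h6, h7⟩ := h
  have gA : ∀ v ∈ A, f v ≤ g v + 1 := fun v hv => hg v (by
    rw [List.mem_flatten]; exact ⟨[v], by simp [parts, hv], by simp⟩)
  have gS : ∀ v ∈ S, f v ≤ g v + 1 := fun v hv => hg v (by
    rw [List.mem_flatten]; exact ⟨[v], by simp [parts, hv], by simp⟩)
  have gC : ∀ x y z, (x, y, z) ∈ C → f x ≤ g x + 1 ∧ f y ≤ g y + 1 ∧ f z ≤ g z + 1 := by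
    intro x y z hx
    have hm : [x, y, z] ∈ parts A [] C S := by
      simp only [parts, List.mem_append, List.mem_map]
      exact Or.inr (Or.inr (Or.inr ⟨_, hx, rfl⟩))
    exact ⟨hg x (List.mem_flatten.2 ⟨_, hm, by simp⟩), hg y (List.mem_flatten.2 ⟨_, hm, by simp⟩),
      hg z (List.mem_flatten.2 ⟨_, hm, by simp⟩)⟩
  simp only [List.length_cons, List.length_nil] at *
  constructor
  · rw [Ord.app]
    refine ⟨h1.imp (fun v hv m hm => by have := gA v hv; simp only [List.length_nil]; omega), ?_⟩
    exact ⟨by simp only [List.length_nil]; omega, trivial⟩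
  · intro x y hx; simp at hx
  · intro x y hx; simp at hx
  · intro x y z hx; have := h4 x y z (by simp [hx]); have := gC x y z hx
    simp only [List.length_nil]; omega
  · intro x y z hx; have := h5' x y z hx
    simp only [List.length_append, List.length_cons, List.length_nil]; omega
  · intro x y z hx; have := h6 x y z (by simp [hx]); have := h6' x y z hx
    simp only [List.length_append, List.length_nil, List.length_cons]; omega
  · exact h7.imp (fun v hv m hm => by
      have := gS v hv; simp only [List.length_append, List.length_nil, List.length_cons]; omega)

theorem Good.alpha {W : Type} {f g : W → ℕ} {l1 l2 : List W} {a : W}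
    {C : List (W × W × W)} {S : List W} (h : Good f (l1 ++ a :: l2) [] C S)
    (hg : ∀ v, f v ≤ g v + 1) (hO : Ord g C.length (l1 ++ l2))
    (h4' : ∀ x y z, (x, y, z) ∈ C → C.length + 1 ≤ f x ∧ C.length + 1 ≤ f y ∧ C.length + 1 ≤ f z)
    (h5' : ∀ x y z, (x, y, z) ∈ C → 2 * C.length + (l1 ++ l2).length ≤ g x + g y ∧
      2 * C.length + (l1 ++ l2).length ≤ g x + g z ∧ 2 * C.length + (l1 ++ l2).length ≤ g y + g z)
    (h6' : ∀ x y z, (x, y, z) ∈ C → f x + f y + f z ≤ g x + g y + g z + 2) :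
    Good g (l1 ++ l2) [] C S := by
  obtain ⟨h1, h2, h3, h4, h5, h6, h7⟩ := h
  simp only [List.length_cons, List.length_nil, List.length_append] at *
  constructor
  · simpa using hO
  · intro x y hx; simp at hx
  · intro x y hx; simp at hx
  · intro x y z hx; have := h4' x y z hx; have := hg x; have := hg y; have := hg z
    simp only [List.length_nil]; omega
  · intro x y z hx; have := h5' x y z hx
    simp only [List.length_append, List.length_nil]; omega
  · intro x y z hx; have := h6 x y z hx; have := h6' x y z hx
    simp only [List.length_append, List.length_nil]; omega
  · exact h7.imp (fun v hv m hm => by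
      have := hg v; simp only [List.length_append, List.length_nil]; omega)

theorem arr {W : Type} {C : List (W × W × W)} {x y z x' y' z' : W} (h : (x, y, z) ∈ C)
    (hp : [x, y, z].Perm [x', y', z']) :
    ∃ C' : List (W × W × W), C'.length + 1 = C.length ∧ C' ⊆ C ∧
      (∀ A B S, (parts A B C S).flatten.Perm (parts A B ((x', y', z') :: C') S).flatten) ∧
      (∀ L A B S, Col L (parts A B ((x', y', z') :: C') S) → Col L (parts A B C S)) ∧
      ∀ f A B S, Good f A B C S → Good f A B ((x', y', z') :: C') S := by
  obtain ⟨l1, l2, rfl⟩ := List.append_of_mem h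
  have hperm : (l1 ++ (x, y, z) :: l2).Perm ((x, y, z) :: (l1 ++ l2)) := List.perm_middle
  have hlen : (l1 ++ (x, y, z) :: l2).length = (l1 ++ l2).length + 1 := hperm.length_eq
  refine ⟨l1 ++ l2, hlen.symm, by grind, ?_, ?_, ?_⟩
  · intro A B S
    refine ((parts_permC A B S hperm).trans (parts_C _ _ _ _ _)).flatten.trans ?_
    refine List.Perm.trans ?_ (parts_C _ _ _ _ _).flatten.symm
    simp only [List.flatten_cons]
    exact List.Perm.append_right _ hp
  · intro L A B S hc
    refine Col.perm ?_ ((parts_permC A B S hperm).trans (parts_C _ _ _ _ _)).symm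
    refine (hc.perm (parts_C _ _ _ _ _)).sub ?_
    intro v hv
    exact hp.mem_iff.1 hv
  · intro f A B S hG
    obtain ⟨h1, h2, h3, h4, h5, h6, h7⟩ := hG
    have hs : f x + f y + f z = f x' + f y' + f z' := by
      have := (hp.map f).sum_eq
      simp only [List.map_cons, List.map_nil, List.sum_cons, List.sum_nil] at this
      omega
    have hx' : x' ∈ [x, y, z] := hp.mem_iff.2 (by simp)
    have hy' : y' ∈ [x, y, z] := hp.mem_iff.2 (by simp)
    have hz' : z' ∈ [x, y, z] := hp.mem_iff.2 (by simp)
    have hl2 : ((x', y', z') :: (l1 ++ l2)).length = (l1 ++ (x, y, z) :: l2).length := hlen.symm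
    have e4 : ∀ v ∈ [x, y, z], B.length + (l1 ++ (x, y, z) :: l2).length ≤ f v := by
      have := h4 x y z (by simp)
      intro v hv; simp only [List.mem_cons, List.not_mem_nil, or_false] at hv
      rcases hv with rfl | rfl | rfl <;> omega
    have e5 : ∀ v ∈ [x, y, z], 2 * (l1 ++ (x, y, z) :: l2).length + 2 * B.length + A.length + f v
        ≤ f x + f y + f z := by
      have := h5 x y z (by simp)
      intro v hv; simp only [List.mem_cons, List.not_mem_nil, or_false] at hv
      rcases hv with rfl | rfl | rfl <;> omega
    have hsub : ∀ t ∈ l1 ++ l2, t ∈ l1 ++ (x, y, z) :: l2 := by grind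
    constructor
    · rw [hl2]; exact h1
    · rw [hl2]; exact h2
    · rw [hl2]; exact h3
    · rw [hl2]; intro a b c hm
      rcases List.mem_cons.1 hm with hm | hm
      · obtain ⟨rfl, rfl, rfl⟩ : a = x' ∧ b = y' ∧ c = z' := by simpa using hm
        exact ⟨e4 _ hx', e4 _ hy', e4 _ hz'⟩
      · exact h4 a b c (hsub _ hm)
    · rw [hl2]; intro a b c hm
      rcases List.mem_cons.1 hm with hm | hm
      · obtain ⟨rfl, rfl, rfl⟩ : a = x' ∧ b = y' ∧ c = z' := by simpa using hm
        have := e5 _ hx'; have := e5 _ hy'; have := e5 _ hz'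
        omega
      · exact h5 a b c (hsub _ hm)
    · rw [hl2]; intro a b c hm
      rcases List.mem_cons.1 hm with hm | hm
      · obtain ⟨rfl, rfl, rfl⟩ : a = x' ∧ b = y' ∧ c = z' := by simpa using hm
        have := h6 x y z (by simp)
        omega
      · exact h6 a b c (hsub _ hm)
    · rw [hl2]; exact h7

theorem ec (X : Finset ℕ) (c : ℕ) : (c ∈ X ∧ X.card = (X.erase c).card + 1) ∨
    (c ∉ X ∧ X.card = (X.erase c).card) := by
  by_cases h : c ∈ X
  · exact Or.inl ⟨h, (Finset.card_erase_add_one h).symm⟩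
  · exact Or.inr ⟨h, by rw [Finset.erase_eq_of_notMem h]⟩

theorem ec1 {W : Type} (L : W → Finset ℕ) (c : ℕ) (v : W) :
    (L v).card ≤ ((L v).erase c).card + 1 := by
  rcases ec (L v) c with h | h <;> omega

theorem share {X Y P : Finset ℕ} (hX : X ⊆ P) (hY : Y ⊆ P) (h : P.card < X.card + Y.card) :
    ∃ c, c ∈ X ∧ c ∈ Y := by
  have h1 := Finset.card_union_add_card_inter X Y
  have h2 := Finset.card_le_card (Finset.union_subset hX hY)
  have : (X ∩ Y).Nonempty := by rw [← Finset.card_pos]; omega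
  obtain ⟨c, hc⟩ := this
  exact ⟨c, Finset.mem_inter.1 hc⟩

theorem triple_mem {W : Type} {A : List W} {B : List (W × W)} {C : List (W × W × W)} {S : List W}
    {x y z : W} (h : (x, y, z) ∈ C) : x ∈ (parts A B C S).flatten ∧
      y ∈ (parts A B C S).flatten ∧ z ∈ (parts A B C S).flatten := by
  have hm : [x, y, z] ∈ parts A B C S := by
    simp only [parts, List.mem_append, List.mem_map]
    exact Or.inr (Or.inr (Or.inr ⟨_, h, rfl⟩))
  exact ⟨List.mem_flatten.2 ⟨_, hm, by simp⟩, List.mem_flatten.2 ⟨_, hm, by simp⟩,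
    List.mem_flatten.2 ⟨_, hm, by simp⟩⟩

theorem double_mem {W : Type} {A : List W} {B : List (W × W)} {C : List (W × W × W)} {S : List W}
    {x y : W} (h : (x, y) ∈ B) : x ∈ (parts A B C S).flatten ∧
      y ∈ (parts A B C S).flatten := by
  have hm : [x, y] ∈ parts A B C S := by
    simp only [parts, List.mem_append, List.mem_map]
    exact Or.inr (Or.inr (Or.inl ⟨_, h, rfl⟩))
  exact ⟨List.mem_flatten.2 ⟨_, hm, by simp⟩, List.mem_flatten.2 ⟨_, hm, by simp⟩⟩

theorem A_mem {W : Type} {A : List W} {B : List (W × W)} {C : List (W × W × W)} {S : List W}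
    {x : W} (h : x ∈ A) : x ∈ (parts A B C S).flatten :=
  List.mem_flatten.2 ⟨[x], by simp [parts, h], by simp⟩

theorem S_mem {W : Type} {A : List W} {B : List (W × W)} {C : List (W × W × W)} {S : List W}
    {x : W} (h : x ∈ S) : x ∈ (parts A B C S).flatten :=
  List.mem_flatten.2 ⟨[x], by simp [parts, h], by simp⟩

theorem ndC {W : Type} {A : List W} {B : List (W × W)} {C : List (W × W × W)} {S : List W}
    {x y z : W} (h : (parts A B ((x, y, z) :: C) S).flatten.Nodup) :
    ([x, y, z] ++ (parts A B C S).flatten).Nodup := by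
  have := (parts_C A (x, y, z) B C S).flatten.nodup_iff.1 h
  simpa [tl] using this

/-- Induction hypothesis for the main theorem. -/
def IH (W : Type) (n : ℕ) : Prop :=
  ∀ (L : W → Finset ℕ) (A : List W) (B : List (W × W)) (C : List (W × W × W)) (S : List W),
    3 * C.length + 2 * B.length + A.length + S.length < n → (parts A B C S).flatten.Nodup →
    Good (fun v => (L v).card) A B C S → Col L (parts A B C S)

section steps

theorem step_full {W : Type} [DecidableEq W] {L : W → Finset ℕ} {A : List W} {B : List (W × W)}
    {C : List (W × W × W)} {S : List W} {x y z : W} {c n : ℕ} (ih : IH W n)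
    (hn : 3 * (C.length + 1) + 2 * B.length + A.length + S.length ≤ n)
    (hnd : (parts A B ((x, y, z) :: C) S).flatten.Nodup)
    (hG : Good (fun v => (L v).card) A B ((x, y, z) :: C) S)
    (hx : c ∈ L x) (hy : c ∈ L y) (hz : c ∈ L z) : Col L (parts A B ((x, y, z) :: C) S) := by
  have hnd' := ndC hnd
  refine Col.perm ?_ (parts_C A (x, y, z) B C S).symm
  refine Col.move (q := []) (c := c) (Col.nil ?_) hnd' (by simp) ?_
  · exact ih _ A B C S (by omega) hnd'.of_append_right (hG.full (ec1 L c))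
  · intro v hv _
    simp only [tl, List.mem_cons, List.not_mem_nil, or_false] at hv
    rcases hv with rfl | rfl | rfl <;> assumption

theorem step_double {W : Type} [DecidableEq W] {L : W → Finset ℕ} {A : List W} {B : List (W × W)}
    {C : List (W × W × W)} {S : List W} {x y : W} {c n : ℕ} (ih : IH W n)
    (hn : 3 * C.length + 2 * (B.length + 1) + A.length + S.length ≤ n)
    (hnd : (parts A ((x, y) :: B) C S).flatten.Nodup)
    (hG : Good (fun v => (L v).card) A ((x, y) :: B) C S)
    (hx : c ∈ L x) (hy : c ∈ L y) : Col L (parts A ((x, y) :: B) C S) := by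
  have hnd' : ([x, y] ++ (parts A B C S).flatten).Nodup := by
    simpa using (parts_B A (x, y) B C S).flatten.nodup_iff.1 hnd
  refine Col.perm ?_ (parts_B A (x, y) B C S).symm
  refine Col.move (q := []) (c := c) (Col.nil ?_) hnd' (by simp) ?_
  · exact ih _ A B C S (by omega) hnd'.of_append_right (hG.double (ec1 L c))
  · intro v hv _
    simp only [List.mem_cons, List.not_mem_nil, or_false] at hv
    rcases hv with rfl | rfl <;> assumption

theorem step_zeta {W : Type} [DecidableEq W] {L : W → Finset ℕ} {A : List W}
    {C : List (W × W × W)} {S : List W} {x y z : W} {c n : ℕ} (ih : IH W n)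
    (hn : 3 * (C.length + 1) + A.length + S.length ≤ n)
    (hnd : (parts A [] ((x, y, z) :: C) S).flatten.Nodup)
    (hG : Good (fun v => (L v).card) A [] ((x, y, z) :: C) S)
    (hx : c ∈ L x) (hy : c ∈ L y) (hz : c ∉ L z) (hz2 : 2 * C.length + A.length + 1 ≤ (L z).card) :
    Col L (parts A [] ((x, y, z) :: C) S) := by
  have hnd' := ndC hnd
  refine Col.perm ?_ (parts_C A (x, y, z) [] C S).symm
  refine Col.move (q := [z]) (c := c) ?_ hnd' (by simp [tl]) ?_
  · refine Col.perm ?_ (parts_S A [] S z [] C)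
    refine ih _ A [] C (z :: S) (by simp only [List.length_nil, List.length_cons]; omega) ?_
      (hG.zeta (ec1 L c) ?_)
    · refine (parts_S A [] S z [] C).flatten.nodup_iff.2 ?_
      simp only [List.cons_append, List.nil_append, List.flatten_cons] at hnd' ⊢
      exact hnd'.of_cons.of_cons
    · simpa only [Finset.erase_eq_of_notMem hz] using hz2
  · intro v hv hv2
    simp only [tl, List.mem_cons, List.not_mem_nil, or_false] at hv hv2
    rcases hv with rfl | rfl | rfl
    · exact hx
    · exact hy
    · exact absurd rfl hv2

/-- The standing assumptions after the first reductions. -/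
structure Std {W : Type} (L : W → Finset ℕ) (T : ℕ) (C : List (W × W × W)) : Prop where
  nf : ∀ x y z, (x, y, z) ∈ C → ∀ c, ¬ (c ∈ L x ∧ c ∈ L y ∧ c ∈ L z)
  t1 : ∀ x y z, (x, y, z) ∈ C → ∀ c, c ∈ L x → c ∈ L y → T + 1 ≤ (L x).card + (L y).card
  t2 : ∀ x y z, (x, y, z) ∈ C → ∀ c, c ∈ L x → c ∈ L z → T + 1 ≤ (L x).card + (L z).card
  t3 : ∀ x y z, (x, y, z) ∈ C → ∀ c, c ∈ L y → c ∈ L z → T + 1 ≤ (L y).card + (L z).card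

theorem Std.e5 {W : Type} {L : W → Finset ℕ} {T : ℕ} {C : List (W × W × W)} (h : Std L T C)
    {x y z : W} (hm : (x, y, z) ∈ C) (c : ℕ) (h5 : T ≤ (L x).card + (L y).card ∧
      T ≤ (L x).card + (L z).card ∧ T ≤ (L y).card + (L z).card) :
    (T ≤ ((L x).erase c).card + ((L y).erase c).card + 1 ∧
      T ≤ ((L x).erase c).card + ((L z).erase c).card + 1 ∧
      T ≤ ((L y).erase c).card + ((L z).erase c).card + 1) ∧
    (L x).card + (L y).card + (L z).card ≤
      ((L x).erase c).card + ((L y).erase c).card + ((L z).erase c).card + 2 := by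
  have h0 := h.nf x y z hm c
  have h1 := h.t1 x y z hm c
  have h2 := h.t2 x y z hm c
  have h3 := h.t3 x y z hm c
  rcases ec (L x) c with ⟨hx, hx'⟩ | ⟨hx, hx'⟩ <;> rcases ec (L y) c with ⟨hy, hy'⟩ | ⟨hy, hy'⟩ <;>
    rcases ec (L z) c with ⟨hz, hz'⟩ | ⟨hz, hz'⟩ <;>
    simp only [hx, hy, hz, true_implies, and_self, not_true, and_true, and_false] at h0 h1 h2 h3 <;>
    omega

theorem step_beta {W : Type} [DecidableEq W] {L : W → Finset ℕ} {A : List W}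
    {C : List (W × W × W)} {S : List W} {x y z : W} {c n : ℕ} (ih : IH W n)
    (hn : 3 * (C.length + 1) + A.length + S.length ≤ n)
    (hnd : (parts A [] ((x, y, z) :: C) S).flatten.Nodup)
    (hG : Good (fun v => (L v).card) A [] ((x, y, z) :: C) S)
    (hS : Std L (2 * (C.length + 1) + A.length) C)
    (hx : c ∈ L x) (hy : c ∈ L y) (hz : c ∉ L z) (hz2 : C.length + 1 + A.length ≤ (L z).card) :
    Col L (parts A [] ((x, y, z) :: C) S) := by
  have hnd' := ndC hnd
  refine Col.perm ?_ (parts_C A (x, y, z) [] C S).symm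
  have hp : (parts (A ++ [z]) [] C S).Perm ([z] :: parts A [] C S) := by
    simpa using parts_A A [] z [] C S
  refine Col.move (q := [z]) (c := c) ?_ hnd' (by simp [tl]) ?_
  · refine Col.perm ?_ hp
    have h5 : ∀ x y z, (x, y, z) ∈ C → _ := fun x y z hm => hS.e5 hm c (by
      have := hG.h5 x y z (by simp [hm])
      simpa using this)
    refine ih _ (A ++ [z]) [] C S (by
      simp only [List.length_nil, List.length_cons, List.length_append]; omega) ?_
      (hG.beta (fun v _ => ec1 L c v) ?_ ?_ ?_)
    · refine hp.flatten.nodup_iff.2 ?_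
      simp only [List.cons_append, List.nil_append, List.flatten_cons] at hnd' ⊢
      exact hnd'.of_cons.of_cons
    · simpa only [Finset.erase_eq_of_notMem hz] using hz2
    · intro x y z hm
      have := (h5 x y z hm).1
      omega
    · intro x y z hm
      exact (h5 x y z hm).2
  · intro v hv hv2
    simp only [tl, List.mem_cons, List.not_mem_nil, or_false] at hv hv2
    rcases hv with rfl | rfl | rfl
    · exact hx
    · exact hy
    · exact absurd rfl hv2

theorem step_delta {W : Type} [DecidableEq W] {L : W → Finset ℕ} {A : List W}
    {C : List (W × W × W)} {S : List W} {x y z : W} {c n : ℕ} (ih : IH W n)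
    (hn : 3 * (C.length + 1) + A.length + S.length ≤ n)
    (hnd : (parts A [] ((x, y, z) :: C) S).flatten.Nodup)
    (hG : Good (fun v => (L v).card) A [] ((x, y, z) :: C) S)
    (hS : Std L (2 * (C.length + 1) + A.length) C)
    (hx : c ∈ L x) (hy : c ∉ L y) (hyz : C.length + 1 + A.length ≤ (L y ∩ L z).card) :
    Col L (parts A [] ((x, y, z) :: C) S) := by
  have hnd' := ndC hnd
  refine Col.perm ?_ (parts_C A (x, y, z) [] C S).symm
  have hp : (parts (A ++ [y]) [] C S).Perm ([y] :: parts A [] C S) := by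
    simpa using parts_A A [] y [] C S
  have hyn : y ∉ (parts A [] C S).flatten := by
    simp only [List.cons_append, List.nil_append, List.nodup_cons, List.mem_cons, not_or] at hnd'
    exact hnd'.2.1.2
  set M : W → Finset ℕ := Function.update (fun v => (L v).erase c) y
    ((L y).erase c ∩ (L z).erase c) with hM
  have hMy : ∀ v ∈ (parts A [] C S).flatten, M v = (L v).erase c := by
    intro v hv
    have : v ≠ y := by rintro rfl; exact hyn hv
    simp [hM, this]
  refine Col.move (q := [y, z]) (c := c) ?_ hnd' (by simp [tl]) ?_
  · refine Col.merge (L := fun v => (L v).erase c) ?_ ?_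
    · refine Col.perm ?_ hp
      have h5 : ∀ x y z, (x, y, z) ∈ C → _ := fun x y z hm => hS.e5 hm c (by
        have := hG.h5 x y z (by simp [hm])
        simpa using this)
      refine ih _ (A ++ [y]) [] C S (by
        simp only [List.length_nil, List.length_cons, List.length_append]; omega) ?_
        (hG.beta (fun v hv => ?_) ?_ ?_ ?_)
      · refine hp.flatten.nodup_iff.2 ?_
        simp only [List.cons_append, List.nil_append, List.flatten_cons] at hnd' ⊢
        have h3 := hnd'.of_cons
        rw [List.nodup_cons] at h3 ⊢
        exact ⟨fun h => h3.1 (by simp [h]), h3.2.of_cons⟩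
      · change (L v).card ≤ (M v).card + 1
        rw [hMy v hv]
        exact ec1 L c v
      · change _ ≤ (M y).card
        rw [hM, Function.update_self]
        refine hyz.trans (Finset.card_le_card ?_)
        intro d hd
        have hd1 := Finset.mem_inter.1 hd
        have : d ≠ c := by rintro rfl; exact hy hd1.1
        simp [this, hd1]
      · intro x y z hm
        have h6 := (h5 x y z hm).1
        have h7 := triple_mem (A := A) (B := []) (S := S) hm
        change _ ≤ (M x).card + (M y).card ∧ _ ≤ (M x).card + (M z).card ∧
          _ ≤ (M y).card + (M z).card
        rw [hMy x h7.1, hMy y h7.2.1, hMy z h7.2.2]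
        omega
      · intro x y z hm
        have h6 := (h5 x y z hm).2
        have h7 := triple_mem (A := A) (B := []) (S := S) hm
        change _ ≤ (M x).card + (M y).card + (M z).card + 2
        rw [hMy x h7.1, hMy y h7.2.1, hMy z h7.2.2]
        omega
    · simp only [List.cons_append, List.nil_append] at hnd' ⊢
      exact hnd'.of_cons
  · intro v hv hv2
    simp only [tl, List.mem_cons, List.not_mem_nil, or_false] at hv hv2
    rcases hv with rfl | rfl | rfl
    · exact hx
    · exact absurd (Or.inl rfl) hv2
    · exact absurd (Or.inr rfl) hv2

theorem step_alpha {W : Type} [DecidableEq W] {L : W → Finset ℕ} {A : List W}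
    {C : List (W × W × W)} {S : List W} {n : ℕ} (ih : IH W n)
    (hn : 3 * C.length + A.length + S.length ≤ n)
    (hnd : (parts A [] C S).flatten.Nodup)
    (hG : Good (fun v => (L v).card) A [] C S)
    (hS : Std L (2 * C.length + A.length) C)
    (h4 : ∀ x y z, (x, y, z) ∈ C → C.length + 1 ≤ (L x).card ∧ C.length + 1 ≤ (L y).card ∧
      C.length + 1 ≤ (L z).card) (hA : A ≠ []) :
    Col L (parts A [] C S) := by
  have hne : ∃ c, ∃ v ∈ A, c ∈ L v := by
    obtain ⟨a, A', rfl⟩ := List.exists_cons_of_ne_nil hA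
    have := hG.h1.1
    have : (L a).Nonempty := by rw [← Finset.card_pos]; simp only at this; omega
    obtain ⟨c, hc⟩ := this
    exact ⟨c, a, by simp, hc⟩
  obtain ⟨c, hc⟩ := hne
  obtain ⟨l1, a, l2, rfl, hca, hO⟩ := Ord.alpha hG.h1 hc
  have hnd' : ([a] ++ (parts (l1 ++ l2) [] C S).flatten).Nodup := by
    simpa using (parts_A l1 l2 a [] C S).flatten.nodup_iff.1 hnd
  refine Col.perm ?_ (parts_A l1 l2 a [] C S).symm
  have h5 : ∀ x y z, (x, y, z) ∈ C → _ := fun x y z hm => hS.e5 hm c (by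
    have := hG.h5 x y z hm
    simpa using this)
  refine Col.move (q := []) (c := c) (Col.nil ?_) hnd' (by simp) ?_
  · refine ih _ (l1 ++ l2) [] C S ?_ hnd'.of_append_right
      (hG.alpha (ec1 L c) (by simpa using hO) h4 ?_ ?_)
    · simp only [List.length_append, List.length_cons, List.length_nil] at hn ⊢
      omega
    · intro x y z hm
      have := (h5 x y z hm).1
      simp only [List.length_append, List.length_cons] at this ⊢
      omega
    · intro x y z hm
      exact (h5 x y z hm).2
  · intro v hv _
    simp only [List.mem_cons, List.not_mem_nil, or_false] at hv
    rw [hv]; exact hca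

end steps

theorem main_step {W : Type} [DecidableEq W] {L : W → Finset ℕ} {A : List W} {B : List (W × W)}
    {C : List (W × W × W)} {S : List W} {n : ℕ} (ih : IH W n)
    (hn : 3 * C.length + 2 * B.length + A.length + S.length = n)
    (hnd : (parts A B C S).flatten.Nodup)
    (hG : Good (fun v => (L v).card) A B C S)
    (Y : Finset ℕ) (hY : Y.card < n) (hLY : ∀ v ∈ (parts A B C S).flatten, L v ⊆ Y)
    (hne : B ≠ [] ∨ C ≠ []) : Col L (parts A B C S) := by
  by_contra hno
  have nf : ∀ x y z, (x, y, z) ∈ C → ∀ x' y' z', [x, y, z].Perm [x', y', z'] → ∀ c,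
      ¬ (c ∈ L x' ∧ c ∈ L y' ∧ c ∈ L z') := by
    rintro x y z hm x' y' z' hp c ⟨h1, h2, h3⟩
    obtain ⟨C', hl, hsub, hfl, hcol, hgood⟩ := arr hm hp
    exact hno (hcol _ _ _ _ (step_full ih (by omega) ((hfl _ _ _).nodup_iff.1 hnd)
      (hgood _ _ _ _ hG) h1 h2 h3))
  have hB : B = [] := by
    by_contra hB
    obtain ⟨⟨x, y⟩, B', rfl⟩ := List.exists_cons_of_ne_nil hB
    have h3 := hG.h3 x y (by simp)
    have hm := double_mem (A := A) (B := (x, y) :: B') (C := C) (S := S) (x := x) (y := y) (by simp)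
    obtain ⟨c, hc1, hc2⟩ := share (hLY x hm.1) (hLY y hm.2) (by omega)
    exact hno (step_double ih (by simp only [List.length_cons] at hn; omega) hnd hG hc1 hc2)
  subst hB
  simp only [ne_eq, not_true_eq_false, false_or] at hne
  simp only [List.length_nil] at hn
  have key : ∀ x y z, (x, y, z) ∈ C → ∀ x' y' z', [x, y, z].Perm [x', y', z'] → ∀ c,
      c ∈ L x' → c ∈ L y' → 2 * C.length + A.length + 1 ≤ (L x').card + (L y').card := by
    intro x y z hm x' y' z' hp c h1 h2
    obtain ⟨C', hl, hsub, hfl, hcol, hgood⟩ := arr hm hp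
    by_contra hlt
    have hG' := hgood _ _ _ _ hG
    have h6 := hG'.h6 x' y' z' (by simp)
    simp only [List.length_cons, List.length_nil] at h6
    exact hno (hcol _ _ _ _ (step_zeta ih (by omega) ((hfl _ _ _).nodup_iff.1 hnd)
      hG' h1 h2 (fun h3 => nf x y z hm x' y' z' hp c ⟨h1, h2, h3⟩) (by omega)))
  have std : Std L (2 * C.length + A.length) C := by
    constructor
    · intro x y z hm c
      exact nf x y z hm x y z (List.Perm.refl _) c
    · intro x y z hm c
      exact key x y z hm x y z (List.Perm.refl _) c
    · intro x y z hm c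
      exact key x y z hm x z y ((List.Perm.swap _ _ _).cons _) c
    · intro x y z hm c
      exact key x y z hm y z x (by
        simpa using (List.perm_append_comm (l₁ := [x]) (l₂ := [y, z]))) c
  have beta : ∀ x y z, (x, y, z) ∈ C → ∀ x' y' z', [x, y, z].Perm [x', y', z'] → ∀ c,
      c ∈ L x' → c ∈ L y' → C.length + A.length ≤ (L z').card → False := by
    intro x y z hm x' y' z' hp c h1 h2 hz
    obtain ⟨C', hl, hsub, hfl, hcol, hgood⟩ := arr hm hp
    have std' : Std L (2 * (C'.length + 1) + A.length) C' := by
      rw [hl]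
      exact ⟨fun x y z h => std.nf x y z (hsub h), fun x y z h => std.t1 x y z (hsub h),
        fun x y z h => std.t2 x y z (hsub h), fun x y z h => std.t3 x y z (hsub h)⟩
    exact hno (hcol _ _ _ _ (step_beta ih (by omega) ((hfl _ _ _).nodup_iff.1 hnd)
      (hgood _ _ _ _ hG) std' h1 h2 (fun h3 => nf x y z hm x' y' z' hp c ⟨h1, h2, h3⟩) (by omega)))
  have tight4 : ∀ x y z, (x, y, z) ∈ C → ∀ x' y' z', [x, y, z].Perm [x', y', z'] →
      C.length + 1 ≤ (L x').card := by
    intro x y z hm x' y' z' hp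
    by_contra hlt
    have hp2 : [x, y, z].Perm [x', z', y'] := hp.trans ((List.Perm.swap _ _ _).cons _)
    obtain ⟨C', hl, hsub, hfl, hcol, hgood⟩ := arr hm hp
    have hG' := hgood _ _ _ _ hG
    have h4 := hG'.h4 x' y' z' (by simp)
    have h5 := hG'.h5 x' y' z' (by simp)
    have h6 := hG'.h6 x' y' z' (by simp)
    simp only [List.length_cons, List.length_nil] at h4 h5 h6
    have hxy : Disjoint (L x') (L y') := by
      rw [Finset.disjoint_left]
      intro c h1 h2
      exact beta x y z hm x' y' z' hp c h1 h2 (by omega)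
    have hxz : Disjoint (L x') (L z') := by
      rw [Finset.disjoint_left]
      intro c h1 h2
      exact beta x y z hm x' z' y' hp2 c h1 h2 (by omega)
    have hmem := triple_mem hm (A := A) (B := []) (S := S)
    have hall : ∀ v ∈ [x, y, z], L v ⊆ Y := by
      intro v hv; simp only [List.mem_cons, List.not_mem_nil, or_false] at hv
      rcases hv with rfl | rfl | rfl
      · exact hLY _ hmem.1
      · exact hLY _ hmem.2.1
      · exact hLY _ hmem.2.2
    have hx' : L x' ⊆ Y := hall _ (hp.mem_iff.2 (by simp))
    have hy' : L y' ⊆ Y := hall _ (hp.mem_iff.2 (by simp))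
    have hz' : L z' ⊆ Y := hall _ (hp.mem_iff.2 (by simp))
    have hu := Finset.card_union_add_card_inter (L y') (L z')
    have hdis : Disjoint (L x') (L y' ∪ L z') := Finset.disjoint_union_right.2 ⟨hxy, hxz⟩
    have hu2 := Finset.card_union_of_disjoint hdis
    have hu3 := Finset.card_le_card (Finset.union_subset hx' (Finset.union_subset hy' hz'))
    have hxne : (L x').Nonempty := by rw [← Finset.card_pos]; omega
    obtain ⟨c, hc⟩ := hxne
    have std' : Std L (2 * (C'.length + 1) + A.length) C' := by
      rw [hl]
      exact ⟨fun x y z h => std.nf x y z (hsub h), fun x y z h => std.t1 x y z (hsub h),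
        fun x y z h => std.t2 x y z (hsub h), fun x y z h => std.t3 x y z (hsub h)⟩
    exact hno (hcol _ _ _ _ (step_delta ih (by omega) ((hfl _ _ _).nodup_iff.1 hnd)
      hG' std' hc (Finset.disjoint_left.1 hxy hc) (by omega)))
  by_cases hA : A = []
  · subst hA
    obtain ⟨⟨x, y, z⟩, C', rfl⟩ := List.exists_cons_of_ne_nil hne
    have hm : (x, y, z) ∈ (x, y, z) :: C' := by simp
    have h4 := hG.h4 x y z hm
    have h6 := hG.h6 x y z hm
    have hmem := triple_mem hm (A := []) (B := []) (S := S)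
    have hx := hLY _ hmem.1
    have hy := hLY _ hmem.2.1
    have hz := hLY _ hmem.2.2
    simp only [List.length_cons, List.length_nil] at h4 h6 hn beta
    have b1 : Disjoint (L x) (L y) := by
      rw [Finset.disjoint_left]
      intro c h1 h2
      exact beta x y z hm x y z (List.Perm.refl _) c h1 h2 (by omega)
    have b2 : Disjoint (L x) (L z) := by
      rw [Finset.disjoint_left]
      intro c h1 h2
      exact beta x y z hm x z y ((List.Perm.swap _ _ _).cons _) c h1 h2 (by omega)
    have b3 : Disjoint (L y) (L z) := by
      rw [Finset.disjoint_left]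
      intro c h1 h2
      exact beta x y z hm y z x (by
        simpa using (List.perm_append_comm (l₁ := [x]) (l₂ := [y, z]))) c h1 h2 (by omega)
    have hu := Finset.card_union_of_disjoint b3
    have hu2 := Finset.card_union_of_disjoint (Finset.disjoint_union_right.2 ⟨b1, b2⟩)
    have hu3 := Finset.card_le_card (Finset.union_subset hx (Finset.union_subset hy hz))
    omega
  · refine hno (step_alpha ih (by omega) hnd hG std ?_ hA)
    intro x y z hm
    exact ⟨tight4 x y z hm x y z (List.Perm.refl _),
      tight4 x y z hm y z x (by simpa using (List.perm_append_comm (l₁ := [x]) (l₂ := [y, z]))),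
      tight4 x y z hm z x y (by simpa using (List.perm_append_comm (l₁ := [x, y]) (l₂ := [z])))⟩

theorem Ord.cap {W : Type} {f g : W → ℕ} {N : ℕ} {l : List W} : ∀ {b : ℕ}, Ord f b l →
    b + l.length ≤ N → (∀ v ∈ l, g v = min (f v) N) → Ord g b l := by
  induction l with
  | nil => intros; trivial
  | cons a l ih =>
    intro b h hb hg
    simp only [List.length_cons] at hb
    refine ⟨?_, ih h.2 (by omega) (fun v hv => hg v (by simp [hv]))⟩
    have := hg a (by simp)
    have := h.1
    omega

theorem Good.cap {W : Type} {f g : W → ℕ} {A : List W} {B : List (W × W)}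
    {C : List (W × W × W)} {S : List W} {N : ℕ} (h : Good f A B C S)
    (hg : ∀ v ∈ (parts A B C S).flatten, g v = min (f v) N)
    (hN : 3 * C.length + 2 * B.length + A.length + S.length = N + 1)
    (hd : 1 ≤ C.length ∨ (S.length = 0 ∧ 1 ≤ B.length)) : Good g A B C S := by
  obtain ⟨h1, h2, h3, h4, h5, h6, h7⟩ := h
  constructor
  · exact h1.cap (by omega) (fun v hv => hg v (A_mem hv))
  · intro x y hm
    have := h2 x y hm; have hm := double_mem (A := A) (C := C) (S := S) hm
    have := hg x hm.1; have := hg y hm.2; omega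
  · intro x y hm
    have := h2 x y hm; have := h3 x y hm; have hm := double_mem (A := A) (C := C) (S := S) hm
    have := hg x hm.1; have := hg y hm.2; omega
  · intro x y z hm
    have := h4 x y z hm; have hm := triple_mem (A := A) (B := B) (S := S) hm
    have := hg x hm.1; have := hg y hm.2.1; have := hg z hm.2.2; omega
  · intro x y z hm
    have := h4 x y z hm; have := h5 x y z hm; have hm := triple_mem (A := A) (B := B) (S := S) hm
    have := hg x hm.1; have := hg y hm.2.1; have := hg z hm.2.2; omega
  · intro x y z hm
    have := h4 x y z hm; have := h5 x y z hm; have := h6 x y z hm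
    have hm := triple_mem (A := A) (B := B) (S := S) hm
    have := hg x hm.1; have := hg y hm.2.1; have := hg z hm.2.2; omega
  · rcases hd with hd | hd
    · exact h7.cap (by omega) (fun v hv => hg v (S_mem hv))
    · have hS : S = [] := by rw [← List.length_eq_zero_iff]; exact hd.1
      subst hS
      trivial

theorem main {W : Type} [DecidableEq W] (n : ℕ) : IH W n := by
  induction n with
  | zero => intro L A B C S h; omega
  | succ n ih =>
    intro L A B C S hn hnd hG
    by_cases hlt : 3 * C.length + 2 * B.length + A.length + S.length < n
    · exact ih L A B C S hlt hnd hG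
    have hn' : 3 * C.length + 2 * B.length + A.length + S.length = n := by omega
    by_cases hd : 1 ≤ C.length ∨ (S.length = 0 ∧ 1 ≤ B.length)
    · obtain ⟨N, rfl⟩ : ∃ N, n = N + 1 := ⟨n - 1, by omega⟩
      refine Col.smallPot hnd N (by rw [parts_len]; exact hn') ?_
      rintro L' hL' ⟨Y, hY, hLY⟩
      refine main_step ih hn' hnd (hG.cap hL' hn' hd) Y (by omega) hLY ?_
      rcases hd with h | h
      · right; rintro rfl; simp at h
      · left; rintro rfl; simp at h
    · have hC : C = [] := by rw [← List.length_eq_zero_iff]; omega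
      subst hC
      simp only [List.length_nil] at hd hn'
      rcases List.eq_nil_or_concat' S with rfl | ⟨S', v, rfl⟩
      · have hB : B = [] := by rw [← List.length_eq_zero_iff]; simp at hd; simp [hd]
        subst hB
        rcases List.eq_nil_or_concat' A with rfl | ⟨A', v, rfl⟩
        · exact ⟨fun _ => 0, by simp [parts], by simp [parts]⟩
        · have hp : (parts (A' ++ [v]) [] [] []).Perm ([v] :: parts A' [] [] []) := by
            simpa using parts_A A' [] v [] [] []
          have hnd' : (v :: (parts A' [] [] []).flatten).Nodup := by
            simpa using hp.flatten.nodup_iff.1 hnd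
          have hO := hG.h1
          rw [Ord.app] at hO
          refine Col.perm ?_ hp.symm
          refine Col.greedy ?_ hnd' ?_
          · refine ih L A' [] [] [] (by simp at hn' ⊢; omega) hnd'.of_cons ?_
            exact ⟨hO.1, by simp, by simp, by simp, by simp, by simp, trivial⟩
          · rw [parts_len]
            have := hO.2.1
            simp at this ⊢
            omega
      · have hp : (parts A B [] (S' ++ [v])).Perm ([v] :: parts A B [] S') := by
          simpa using parts_S A S' [] v B []
        have hnd' : (v :: (parts A B [] S').flatten).Nodup := by
          simpa using hp.flatten.nodup_iff.1 hnd
        have hO := hG.h7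
        rw [Ord.app] at hO
        refine Col.perm ?_ hp.symm
        refine Col.greedy ?_ hnd' ?_
        · refine ih L A B [] S' (by simp at hn' ⊢; omega) hnd'.of_cons ?_
          refine ⟨hG.h1, hG.h2, ?_, by simp, by simp, by simp, hO.1⟩
          intro x y hm
          have := hG.h3 x y hm
          simp at this ⊢
          omega
        · rw [parts_len]
          have := hO.2.1
          simp at this ⊢
          omega

theorem Ord.const {W : Type} {f : W → ℕ} {l : List W} : ∀ {b : ℕ},
    (∀ v ∈ l, b + l.length ≤ f v) → Ord f b l := by
  induction l with
  | nil => intros; trivial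
  | cons a l ih =>
    intro b h
    simp only [List.length_cons] at h
    refine ⟨?_, ih ?_⟩
    · have := h a (by simp); omega
    · intro v hv
      have := h v (by simp [hv]); omega

theorem uniform_easy {W : Type} [DecidableEq W] {L : W → Finset ℕ} {A : List W}
    {B : List (W × W)} {C : List (W × W × W)} (hnd : (parts A B C []).flatten.Nodup)
    (hL : ∀ v ∈ (parts A B C []).flatten, A.length + B.length + C.length ≤ (L v).card)
    (hC : C.length ≤ A.length ∨ (B = [] ∧ C.length ≤ A.length + 1)) :
    Col L (parts A B C []) := by
  have hC2 : C.length ≤ A.length + 1 := by omega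
  refine main _ L A B C [] (Nat.lt_succ_self _) hnd ?_
  constructor
  · refine Ord.const ?_
    intro v hv
    have := hL v (A_mem hv)
    omega
  · intro x y hm
    have hm := double_mem (A := A) (C := C) (S := []) hm
    have := hL x hm.1; have := hL y hm.2; omega
  · intro x y hm
    have hB : B ≠ [] := by rintro rfl; simp at hm
    have hm := double_mem (A := A) (C := C) (S := []) hm
    have := hL x hm.1; have := hL y hm.2
    simp only [hB, false_and, or_false] at hC
    simp only [List.length_nil]; omega
  · intro x y z hm
    have hm := triple_mem (A := A) (B := B) (S := []) hm
    have := hL x hm.1; have := hL y hm.2.1; have := hL z hm.2.2; omega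
  · intro x y z hm
    have hm := triple_mem (A := A) (B := B) (S := []) hm
    have := hL x hm.1; have := hL y hm.2.1; have := hL z hm.2.2; omega
  · intro x y z hm
    have hm := triple_mem (A := A) (B := B) (S := []) hm
    have := hL x hm.1; have := hL y hm.2.1; have := hL z hm.2.2
    simp only [List.length_nil]; omega
  · trivial

theorem uniform_hard {W : Type} [DecidableEq W] (b : ℕ) : ∀ {L : W → Finset ℕ} {A : List W}
    {B : List (W × W)} {C : List (W × W × W)} (_ : (parts A B C []).flatten.Nodup)
    (_ : ∀ v ∈ (parts A B C []).flatten, A.length + B.length + C.length ≤ (L v).card)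
    (_ : C.length = A.length + 1) (_ : B.length = b),
    Col L (parts A B C []) := by
  induction b with
  | zero =>
    intro L A B C hnd hL hC hB
    exact uniform_easy hnd hL (Or.inr ⟨List.length_eq_zero_iff.1 hB, hC.le⟩)
  | succ b ih =>
    intro L0 A B C hnd hL0 hC hB
    refine Col.smallPot hnd (2 * (A.length + B.length + C.length))
      (by rw [parts_len]; simp only [List.length_nil]; omega) ?_
    rintro L hL1 ⟨Y, hYc, hLY⟩
    have hL : ∀ v ∈ (parts A B C []).flatten, A.length + B.length + C.length ≤ (L v).card := by
      intro v hv
      have := hL0 v hv; have := hL1 v hv; omega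
    clear hL1 hL0
    by_contra hno
    -- doubles have disjoint lists
    have hdb : ∀ x y, (x, y) ∈ B → ∀ c, ¬ (c ∈ L x ∧ c ∈ L y) := by
      rintro x y hm c ⟨hx, hy⟩
      obtain ⟨l1, l2, rfl⟩ := List.append_of_mem hm
      have hp : (parts A (l1 ++ (x, y) :: l2) C []).Perm ([x, y] :: parts A (l1 ++ l2) C []) :=
        (parts_permB A C [] List.perm_middle).trans (parts_B _ _ _ _ _)
      have hnd' : ([x, y] ++ (parts A (l1 ++ l2) C []).flatten).Nodup := by
        simpa using hp.flatten.nodup_iff.1 hnd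
      refine hno (Col.perm ?_ hp.symm)
      refine Col.move (q := []) (c := c) (Col.nil ?_) hnd' (by simp) ?_
      · simp only [List.length_append, List.length_cons] at hB hL
        refine ih hnd'.of_append_right ?_ hC (by simp only [List.length_append]; omega)
        intro v hv
        have h1 := hL v (hp.flatten.mem_iff.2 (by
          rw [List.flatten_cons]; exact List.mem_append_right _ hv))
        have h2 := ec1 L c v
        simp only [List.length_append]
        omega
      · intro v hv _
        simp only [List.mem_cons, List.not_mem_nil, or_false] at hv
        rcases hv with rfl | rfl <;> assumption
    have nf : ∀ x y z, (x, y, z) ∈ C → ∀ c, ¬ (c ∈ L x ∧ c ∈ L y ∧ c ∈ L z) := by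
      rintro x y z hm c ⟨hx, hy, hz⟩
      obtain ⟨C', hl, hsub, hfl, hcol, -⟩ := arr hm (List.Perm.refl _)
      have hnd' := ndC ((hfl _ _ _).nodup_iff.1 hnd)
      refine hno (hcol _ _ _ _ (Col.perm ?_ (parts_C A (x, y, z) B C' []).symm))
      refine Col.move (q := []) (c := c) (Col.nil ?_) hnd' (by simp) ?_
      · refine uniform_easy hnd'.of_append_right ?_ (Or.inl (by omega))
        intro v hv
        have h1 := hL v ((hfl _ _ _).mem_iff.2 ((parts_C A (x, y, z) B C' []).flatten.mem_iff.2 (by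
          rw [List.flatten_cons]; exact List.mem_append_right _ hv)))
        have h2 := ec1 L c v
        omega
      · intro v hv _
        simp only [tl, List.mem_cons, List.not_mem_nil, or_false] at hv
        rcases hv with rfl | rfl | rfl <;> assumption
    have pr : ∀ x y z, (x, y, z) ∈ C → ∀ x' y' z', [x, y, z].Perm [x', y', z'] →
        Disjoint (L x') (L y') := by
      intro x y z hm x' y' z' hp
      rw [Finset.disjoint_left]
      intro c hx hy
      have hz : c ∉ L z' := by
        intro hz
        have hall : ∀ v ∈ [x', y', z'], c ∈ L v := by
          intro v hv
          simp only [List.mem_cons, List.not_mem_nil, or_false] at hv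
          rcases hv with rfl | rfl | rfl <;> assumption
        exact nf x y z hm c ⟨hall x (hp.mem_iff.1 (by simp)), hall y (hp.mem_iff.1 (by simp)),
          hall z (hp.mem_iff.1 (by simp))⟩
      obtain ⟨C', hl, hsub, hfl, hcol, -⟩ := arr hm hp
      have hnd2 := (hfl A B []).nodup_iff.1 hnd
      have hnd' := ndC hnd2
      have hLz := hL z' ((hfl A B []).mem_iff.2 (triple_mem (x := x') (y := y') (by simp)).2.2)
      have hp2 : (parts (A ++ [z']) B C' []).Perm ([z'] :: parts A B C' []) := by
        simpa using parts_A A [] z' B C' []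
      refine hno (hcol _ _ _ _ (Col.perm ?_ (parts_C A (x', y', z') B C' []).symm))
      refine Col.move (q := [z']) (c := c) (Col.perm ?_ hp2) hnd' (by simp [tl]) ?_
      · have hL' : ∀ v ∈ (parts A B C' []).flatten,
            A.length + B.length + C.length ≤ (L v).card := by
          intro v hv
          exact hL v ((hfl _ _ _).mem_iff.2 ((parts_C A (x', y', z') B C' []).flatten.mem_iff.2 (by
            rw [List.flatten_cons]; exact List.mem_append_right _ hv)))
        refine main _ _ (A ++ [z']) B C' [] (Nat.lt_succ_self _) ?_ ?_
        · refine hp2.flatten.nodup_iff.2 ?_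
          simp only [List.cons_append, List.nil_append, List.flatten_cons] at hnd' ⊢
          exact hnd'.of_cons.of_cons
        constructor
        · rw [Ord.app]
          constructor
          · refine Ord.const ?_
            intro v hv
            have := hL' v (A_mem hv)
            have := ec1 L c v
            omega
          · refine ⟨?_, trivial⟩
            change _ ≤ ((L z').erase c).card
            rw [Finset.erase_eq_of_notMem hz]
            omega
        · intro u v hm
          have hm := double_mem (A := A) (C := C') (S := []) hm
          have := hL' u hm.1; have := hL' v hm.2; have := ec1 L c u; have := ec1 L c v
          omega
        · intro u v hm
          have hd := hdb u v hm c
          have hm := double_mem (A := A) (C := C') (S := []) hm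
          have := hL' u hm.1; have := hL' v hm.2
          simp only [List.length_append, List.length_cons, List.length_nil]
          rcases ec (L u) c with h | h <;> rcases ec (L v) c with h' | h'
          · exact absurd ⟨h.1, h'.1⟩ hd
          all_goals omega
        · intro u v w hm
          have hm := triple_mem (A := A) (B := B) (S := []) hm
          have := hL' u hm.1; have := hL' v hm.2.1; have := hL' w hm.2.2
          have := ec1 L c u; have := ec1 L c v; have := ec1 L c w
          omega
        · intro u v w hm
          have hpos : 0 < C'.length := List.length_pos_of_mem hm
          have hm := triple_mem (A := A) (B := B) (S := []) hm
          have := hL' u hm.1; have := hL' v hm.2.1; have := hL' w hm.2.2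
          have := ec1 L c u; have := ec1 L c v; have := ec1 L c w
          simp only [List.length_append, List.length_cons, List.length_nil]
          omega
        · intro u v w hm
          have hd := nf u v w (hsub hm) c
          have hm := triple_mem (A := A) (B := B) (S := []) hm
          have := hL' u hm.1; have := hL' v hm.2.1; have := hL' w hm.2.2
          simp only [List.length_append, List.length_cons, List.length_nil]
          rcases ec (L u) c with h | h <;> rcases ec (L v) c with h' | h' <;>
            rcases ec (L w) c with h'' | h''
          · exact absurd ⟨h.1, h'.1, h''.1⟩ hd
          all_goals omega
        · trivial
      · intro v hv hv2
        simp only [tl, List.mem_cons, List.not_mem_nil, or_false] at hv hv2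
        rcases hv with rfl | rfl | rfl
        · exact hx
        · exact hy
        · exact absurd rfl hv2
    obtain ⟨⟨x, y, z⟩, hm⟩ : ∃ t, t ∈ C := by
      cases C with
      | nil => simp at hC
      | cons t C => exact ⟨t, by simp⟩
    have b1 := pr x y z hm x y z (List.Perm.refl _)
    have b2 := pr x y z hm x z y ((List.Perm.swap _ _ _).cons _)
    have b3 := pr x y z hm y z x
      (by simpa using (List.perm_append_comm (l₁ := [x]) (l₂ := [y, z])))
    have hmem := triple_mem hm (A := A) (B := B) (S := [])
    have hu := Finset.card_union_of_disjoint b3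
    have hu2 := Finset.card_union_of_disjoint (Finset.disjoint_union_right.2 ⟨b1, b2⟩)
    have hu3 := Finset.card_le_card (Finset.union_subset (hLY _ hmem.1)
      (Finset.union_subset (hLY _ hmem.2.1) (hLY _ hmem.2.2)))
    have := hL x hmem.1; have := hL y hmem.2.1; have := hL z hmem.2.2
    omega

theorem classify {W : Type} (Ps : List (List W)) (h : ∀ p ∈ Ps, 1 ≤ p.length ∧ p.length ≤ 3) :
    ∃ A B C, Ps.Perm (parts A B C []) := by
  induction Ps with
  | nil => exact ⟨[], [], [], by simp [parts]⟩
  | cons p Ps ih =>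
    obtain ⟨A, B, C, hp⟩ := ih (fun q hq => h q (by simp [hq]))
    have hl := h p (by simp)
    match p, hl with
    | [], hl => simp at hl
    | [x], _ => exact ⟨x :: A, B, C, hp.cons _⟩
    | [x, y], _ => exact ⟨A, (x, y) :: B, C, (hp.cons _).trans (parts_B A (x, y) B C []).symm⟩
    | [x, y, z], _ =>
      exact ⟨A, B, (x, y, z) :: C, (hp.cons _).trans (parts_C A (x, y, z) B C []).symm⟩
    | _ :: _ :: _ :: _ :: _, hl => simp only [List.length_cons] at hl; omega

theorem uniform {W : Type} [DecidableEq W] {L : W → Finset ℕ} {Ps : List (List W)}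
    (h : ∀ p ∈ Ps, 1 ≤ p.length ∧ p.length ≤ 3) (hnd : Ps.flatten.Nodup)
    (hlen : Ps.flatten.length ≤ 2 * Ps.length + 1)
    (hL : ∀ v, Ps.length ≤ (L v).card) : Col L Ps := by
  obtain ⟨A, B, C, hp⟩ := classify Ps h
  have h1 : Ps.length = A.length + B.length + C.length := by
    rw [hp.length_eq]; simp [parts]; omega
  have h2 : Ps.flatten.length = _ := hp.flatten.length_eq.trans (parts_len A B C [])
  simp only [List.length_nil] at h2
  have hnd' := hp.flatten.nodup_iff.1 hnd
  refine Col.perm ?_ hp.symm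
  by_cases hC : C.length ≤ A.length
  · exact uniform_easy hnd' (fun v _ => h1 ▸ hL v) (Or.inl hC)
  · exact uniform_hard B.length hnd' (fun v _ => h1 ▸ hL v) (by omega) rfl

end Ohba

/-- Ohba's conjecture for independence number at most 3: if every independent set of `G`
has size at most 3 and `|V(G)| ≤ 2χ(G) + 1`, then the choice number of `G` equals its
chromatic number. -/
theorem ohba_of_independence_le_three (G : SimpleGraph V)
    (hInd : ∀ s : Finset V, (∀ u ∈ s, ∀ v ∈ s, ¬ G.Adj u v) → s.card ≤ 3)
    (hcard : Fintype.card V ≤ 2 * chromNum G + 1) :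
    chromNum G = choiceNumber G := by
  classical
  have hcol : G.Colorable (chromNum G) :=
    Nat.sInf_mem (s := {n | G.Colorable n}) ⟨_, G.colorable_of_fintype⟩
  have hch : Choosable G fun _ => chromNum G := by
    intro L hL
    obtain ⟨K⟩ := hcol
    have hsurj : ∀ i, ∃ v, K v = i := by
      intro i
      by_contra hi
      push Not at hi
      have h1 : G.Colorable (Fintype.card {j : Fin (chromNum G) // j ≠ i}) :=
        (SimpleGraph.Coloring.mk (fun v => (⟨K v, hi v⟩ : {j : Fin (chromNum G) // j ≠ i}))
          (fun {u v} huv h => K.valid huv (by simpa using h))).colorable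
      have h2 : chromNum G ≤ _ := Nat.sInf_le (s := {n | G.Colorable n}) h1
      have h3 := Fintype.card_subtype_lt (p := fun j : Fin (chromNum G) => j ≠ i) (x := i)
        (by simp)
      rw [Fintype.card_fin] at h3
      omega
    set cl : Fin (chromNum G) → Finset V := fun i => Finset.univ.filter (fun v => K v = i) with hcl
    have hmemcl : ∀ v i, v ∈ (cl i).toList ↔ K v = i := by intro v i; simp [hcl]
    set Ps : List (List V) := (List.finRange (chromNum G)).map (fun i => (cl i).toList) with hPs
    have hlen : Ps.length = chromNum G := by simp [hPs]
    have hnd : Ps.flatten.Nodup := by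
      rw [List.nodup_flatten]
      constructor
      · intro l hl
        simp only [hPs, List.mem_map] at hl
        obtain ⟨i, _, rfl⟩ := hl
        exact Finset.nodup_toList _
      · rw [hPs, List.pairwise_map]
        refine (List.nodup_finRange _).imp ?_
        intro i j hij v hv hv'
        rw [hmemcl] at hv hv'
        exact hij (hv.symm.trans hv')
    have hfl : Ps.flatten.length ≤ 2 * Ps.length + 1 := by
      rw [hlen]
      refine le_trans ?_ hcard
      rw [← List.toFinset_card_of_nodup hnd]
      exact Finset.card_le_univ _
    have hparts : ∀ p ∈ Ps, 1 ≤ p.length ∧ p.length ≤ 3 := by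
      intro p hp
      simp only [hPs, List.mem_map] at hp
      obtain ⟨i, _, rfl⟩ := hp
      rw [Finset.length_toList]
      constructor
      · obtain ⟨v, hv⟩ := hsurj i
        exact Finset.card_pos.2 ⟨v, by simp [hcl, hv]⟩
      · apply hInd
        intro u hu v hv huv
        simp only [hcl, Finset.mem_filter] at hu hv
        exact K.valid huv (hu.2.trans hv.2.symm)
    obtain ⟨col, h1, h2⟩ := Ohba.uniform (L := L) hparts hnd hfl (fun v => by rw [hlen, hL v])
    have hin : ∀ i, (cl i).toList ∈ Ps := fun i =>
      List.mem_map.2 ⟨i, List.mem_finRange i, rfl⟩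
    refine ⟨col, fun v => h1 _ (hin (K v)) v ((hmemcl _ _).2 rfl), ?_⟩
    intro u v huv
    rw [hPs, List.pairwise_map] at h2
    have hsym : ∀ i j : Fin (chromNum G), (∀ u ∈ (cl i).toList, ∀ v ∈ (cl j).toList, col u ≠ col v) →
        (∀ u ∈ (cl j).toList, ∀ v ∈ (cl i).toList, col u ≠ col v) :=
      fun i j h u hu v hv => (h v hv u hu).symm
    have hne : K u ≠ K v := K.valid huv
    have h3 : ∀ i j : Fin (chromNum G), i ≠ j →
        (∀ u ∈ (cl i).toList, ∀ v ∈ (cl j).toList, col u ≠ col v) := by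
      have h4 := List.pairwise_iff_getElem.1 h2
      intro i j hij
      rcases lt_or_gt_of_ne hij with h | h
      · have := h4 i.1 j.1 (by simp) (by simp) h
        simpa using this
      · have := h4 j.1 i.1 (by simp) (by simp) h
        exact hsym _ _ (by simpa using this)
    exact h3 _ _ hne u ((hmemcl _ _).2 rfl) v ((hmemcl _ _).2 rfl)
  apply le_antisymm
  · have hmem : Choosable G fun _ => choiceNumber G :=
      Nat.sInf_mem (s := {k | Choosable G fun _ => k}) ⟨_, hch⟩
    obtain ⟨c, hc1, hc2⟩ := hmem (fun _ => Finset.range (choiceNumber G)) (fun _ => by simp)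
    refine Nat.sInf_le (s := {n | G.Colorable n}) ?_
    exact ⟨SimpleGraph.Coloring.mk (fun v => (⟨c v, Finset.mem_range.1 (hc1 v)⟩ : Fin _))
      (fun {u v} huv h => hc2 u v huv (by simpa using h))⟩
  · exact Nat.sInf_le (s := {k | Choosable G fun _ => k}) hch
end

section
/- Let G be a complete multipartite graph with every part of size 1 or 3. Let the set of parts of G be partitioned into three classes 𝒜, 𝒮, 𝒞 such that 𝒜 and 𝒮 contain only parts of size 1 and 𝒞 contains all parts of size 3; let k₁ = |𝒜|, s = |𝒮|, k₃ = |𝒞|, and fix orderings 𝒜 = (A₁, …, A_{k₁}) and 𝒮 = (S₁, …, S_s). Suppose f : V(G) → ℕ satisfies: (1) f(v) ≥ k₃ + i for all 1 ≤ i ≤ k₁ and v ∈ A_i; (1') f(v) ≥ 2k₃ + k₁ + i for all 1 ≤ i ≤ s and v ∈ S_i; (3.1) f(v) ≥ k₃ for all v in any C ∈ 𝒞; (3.2) f(u) + f(v) ≥ 2k₃ + k₁ for all distinct u, v in any C ∈ 𝒞; (3.3) Σ_{v∈C} f(v) ≥ 4k₃ + 2k₁ + s − 1 for all C ∈ 𝒞.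 Then G is f-choosable. -/
variable {V : Type} [Fintype V] [DecidableEq V]

theorem numericH (k₁ s k₃ q h p01 p02 p12 f0 f1 f2 : ℕ)
    (c01 : 0 < p01 → f2 + 1 ≤ k₃ + k₁) (c02 : 0 < p02 → f1 + 1 ≤ k₃ + k₁)
    (c12 : 0 < p12 → f0 + 1 ≤ k₃ + k₁)
    (h0 : k₃ ≤ f0) (h1 : k₃ ≤ f1) (h2 : k₃ ≤ f2)
    (h01 : 2 * k₃ + k₁ ≤ f0 + f1) (h02 : 2 * k₃ + k₁ ≤ f0 + f2) (h12 : 2 * k₃ + k₁ ≤ f1 + f2)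
    (hs : 4 * k₃ + 2 * k₁ + s ≤ f0 + f1 + f2 + 1)
    (e0 : p01 + p02 ≤ f0) (e1 : p01 + p12 ≤ f1) (e2 : p02 + p12 ≤ f2)
    (hσ : 2 * k₃ + k₁ ≤ p01 + p02 + p12 + q + 1) (hq : q + h ≤ k₃) (hk : 0 < k₃) :
    (h ≤ p01 ∧ k₃ + k₁ + h ≤ p01 + f2) ∨ (h ≤ p02 ∧ k₃ + k₁ + h ≤ p02 + f1) ∨
    (h ≤ p12 ∧ k₃ + k₁ + h ≤ p12 + f0) := by
  rcases Nat.eq_zero_or_pos p01 with z01 | z01 <;>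
  rcases Nat.eq_zero_or_pos p02 with z02 | z02 <;>
  rcases Nat.eq_zero_or_pos p12 with z12 | z12 <;>
  simp only [z01, z02, z12, forall_const] at c01 c02 c12 <;>
  omega

/-- Hall's theorem relative to a predicate. -/
theorem hallPred {ι : Type} [DecidableEq ι] (Pd : ι → Prop) (t : ι → Finset ℕ)
    (H : ∀ X : Finset ι, (∀ x ∈ X, Pd x) → X.card ≤ (X.biUnion t).card) :
    ∃ c : ι → ℕ, (∀ x, Pd x → c x ∈ t x) ∧ ∀ x y, Pd x → Pd y → c x = c y → x = y := by
  classical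
  have := (Finset.all_card_le_biUnion_card_iff_exists_injective
    (fun x : {x // Pd x} => t x.1)).1 (by
      intro X
      have h := H (X.map (Function.Embedding.subtype _)) (by
        intro x hx
        simp only [Finset.mem_map, Function.Embedding.coe_subtype] at hx
        obtain ⟨a, _, rfl⟩ := hx
        exact a.2)
      rw [Finset.card_map] at h
      refine h.trans (Finset.card_le_card ?_)
      intro y
      simp only [Finset.mem_biUnion, Finset.mem_map]
      rintro ⟨_, ⟨a, ha, rfl⟩, hy⟩
      exact ⟨a, ha, hy⟩)
  obtain ⟨g, hg, hm⟩ := this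
  refine ⟨fun x => if h : Pd x then g ⟨x, h⟩ else 0, ?_, ?_⟩
  · intro x hx
    simp only [hx, dif_pos]
    exact hm ⟨x, hx⟩
  · intro x y hx hy h
    simp only [hx, hy, dif_pos] at h
    simpa using hg h

theorem threshold {κ : Type} [DecidableEq κ] (N : Finset κ) (σ : κ → ℕ) (B : ℕ) :
    ∃ U ⊆ N, (∀ C ∈ U, σ C + U.card + 1 ≤ B) ∧ ∀ C ∈ N, C ∉ U → B ≤ σ C + U.card + 1 := by
  classical
  let Q : ℕ → Prop := fun q => q ≤ (N.filter fun C => σ C + q + 1 ≤ B).card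
  have h0 : Q 0 := Nat.zero_le _
  let q := Nat.findGreatest Q N.card
  have hq : Q q := Nat.findGreatest_spec (Nat.zero_le _) h0
  have hqn : q ≤ N.card := Nat.findGreatest_le _
  have hlow : (N.filter fun C => σ C + q + 2 ≤ B).card ≤ q := by
    by_contra hcon
    push Not at hcon
    have hle : q + 1 ≤ N.card := Nat.le_trans hcon (Finset.card_filter_le _ _)
    have : Q (q + 1) := by
      show q + 1 ≤ _
      refine Nat.le_trans hcon (Finset.card_le_card ?_)
      intro C
      simp only [Finset.mem_filter]
      rintro ⟨a, b⟩
      exact ⟨a, by omega⟩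
    have := Nat.le_findGreatest hle this
    change q + 1 ≤ q at this
    omega
  obtain ⟨U, hU1, hU2, hU3⟩ := Finset.exists_subsuperset_card_eq
    (s := N.filter fun C => σ C + q + 2 ≤ B) (t := N.filter fun C => σ C + q + 1 ≤ B) (n := q)
    (by intro C; simp only [Finset.mem_filter]; rintro ⟨a, b⟩; exact ⟨a, by omega⟩) hlow hq
  refine ⟨U, fun C hC => (Finset.mem_filter.1 (hU2 hC)).1, ?_, ?_⟩
  · intro C hC
    rw [hU3]
    exact (Finset.mem_filter.1 (hU2 hC)).2
  · intro C hC hCU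
    rw [hU3]
    by_contra hcon
    exact hCU (hU1 (Finset.mem_filter.2 ⟨hC, by omega⟩))


/-- Colourability of the abstract instance: parts `A i`, `S i` are singletons, parts `C i` have
three vertices. -/
def Col {k₁ s k₃ : ℕ} (LA : Fin k₁ → Finset ℕ) (LS : Fin s → Finset ℕ)
    (LC : Fin k₃ → Fin 3 → Finset ℕ) : Prop :=
  ∃ (cA : Fin k₁ → ℕ) (cS : Fin s → ℕ) (cC : Fin k₃ → Fin 3 → ℕ),
    (∀ i, cA i ∈ LA i) ∧ (∀ i, cS i ∈ LS i) ∧ (∀ i x, cC i x ∈ LC i x) ∧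
    (∀ i j, i ≠ j → cA i ≠ cA j) ∧ (∀ i j, i ≠ j → cS i ≠ cS j) ∧
    (∀ i j, cA i ≠ cS j) ∧ (∀ i j x, cA i ≠ cC j x) ∧ (∀ i j x, cS i ≠ cC j x) ∧
    (∀ i j x y, i ≠ j → cC i x ≠ cC j y)

theorem card_split {k₁ s k₃ : ℕ} (X : Finset (Fin k₁ ⊕ Fin s ⊕ (Fin k₃ × Fin 3))) :
    X.card = (Finset.univ.filter fun i => Sum.inl i ∈ X).card +
      (Finset.univ.filter fun i => Sum.inr (Sum.inl i) ∈ X).card +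
      ∑ C, (Finset.univ.filter fun x => Sum.inr (Sum.inr (C, x)) ∈ X).card := by
  have e1 := Finset.card_toLeft_add_card_toRight (u := X)
  have e2 := Finset.card_toLeft_add_card_toRight (u := X.toRight)
  have e3 : X.toLeft = (Finset.univ.filter fun i => Sum.inl i ∈ X) := by ext; simp
  have e4 : X.toRight.toLeft = (Finset.univ.filter fun i => Sum.inr (Sum.inl i) ∈ X) := by
    ext; simp
  have e5 : X.toRight.toRight.card =
      ∑ C, (Finset.univ.filter fun x => Sum.inr (Sum.inr (C, x)) ∈ X).card := by
    rw [Finset.card_eq_sum_card_fiberwise (f := Prod.fst) (t := Finset.univ) (by simp)]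
    refine Finset.sum_congr rfl fun C _ => ?_
    refine Finset.card_bij (fun a _ => a.2) ?_ ?_ ?_
    · rintro ⟨a, b⟩ h
      simp only [Finset.mem_filter, Finset.mem_toRight] at h
      obtain ⟨h, rfl⟩ := h
      simpa using h
    · rintro ⟨a, b⟩ h ⟨a', b'⟩ h' e
      simp only [Finset.mem_filter] at h h'
      simp only at e
      rw [Prod.mk.injEq]
      exact ⟨h.2.trans h'.2.symm, e⟩
    · intro b hb
      simp only [Finset.mem_filter, Finset.mem_univ, true_and] at hb
      exact ⟨(C, b), by simpa using hb, rfl⟩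
  rw [← e3, ← e4, ← e5]
  omega

theorem card_filter_fin_le {n : ℕ} (Y : Finset (Fin n)) (m : ℕ) (h : ∀ i ∈ Y, (i : ℕ) ≤ m) :
    Y.card ≤ m + 1 := by
  have : (Y.map Fin.valEmbedding) ⊆ Finset.range (m + 1) := by
    intro a ha
    simp only [Finset.mem_map] at ha
    obtain ⟨i, hi, rfl⟩ := ha
    have := h i hi
    simp only [Fin.valEmbedding_apply, Finset.mem_range]
    omega
  simpa using Finset.card_le_card this

theorem sum_le_of {k : ℕ} (g : Fin k → ℕ) (c : ℕ) (W : Finset (Fin k))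
    (h : ∀ C, g C ≤ c + if C ∈ W then 1 else 0) : ∑ C, g C ≤ c * k + W.card := by
  refine (Finset.sum_le_sum fun C _ => h C).trans ?_
  rw [Finset.sum_add_distrib]
  simp [mul_comm]

theorem fin3_two {Y : Finset (Fin 3)} (h : 2 ≤ Y.card) : ∃ a ∈ Y, ∃ b ∈ Y, a ≠ b := by
  obtain ⟨a, ha, b, hb, hab⟩ := Finset.one_lt_card.1 (by omega : 1 < Y.card)
  exact ⟨a, ha, b, hb, hab⟩

theorem fin3_three {Y : Finset (Fin 3)} (h : 3 ≤ Y.card) : ∀ a, a ∈ Y := by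
  have : Y = Finset.univ := Finset.eq_univ_of_card _ (by
    have := Finset.card_le_univ Y
    simp at this ⊢; omega)
  simp [this]

theorem hallMain {k₁ s k₃ : ℕ} (LA : Fin k₁ → Finset ℕ) (LS : Fin s → Finset ℕ)
    (LC : Fin k₃ → Fin 3 → Finset ℕ) (U H : Finset (Fin k₃)) (x y z : Fin k₃ → Fin 3)
    (hxy : ∀ C, C ∉ U → x C ≠ y C) (hxz : ∀ C, C ∉ U → x C ≠ z C) (hyz : ∀ C, C ∉ U → y C ≠ z C)
    (hA : ∀ i, k₃ + (i + 1) ≤ (LA i).card)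
    (hS : ∀ i, 2 * k₃ + k₁ + (i + 1) ≤ (LS i).card)
    (h31 : ∀ C a, k₃ ≤ (LC C a).card)
    (hHU : ∀ C ∈ H, C ∉ U)
    (U3 : ∀ C ∈ U, 2 * k₃ + k₁ + s + U.card ≤ (LC C 0 ∪ LC C 1 ∪ LC C 2).card)
    (U2 : ∀ C ∈ U, ∀ a b, a ≠ b → 2 * k₃ + k₁ ≤ (LC C a ∪ LC C b).card)
    (G2 : ∀ C, C ∉ U → C ∉ H →
      2 * k₃ + k₁ ≤ ((LC C (x C) ∩ LC C (y C)) ∪ LC C (z C)).card)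
    (G1 : ∀ C, C ∉ U → C ∉ H → k₃ ≤ (LC C (x C) ∩ LC C (y C)).card)
    (H2 : ∀ C ∈ H, k₃ + k₁ + H.card ≤ ((LC C (x C) ∩ LC C (y C)) ∪ LC C (z C)).card)
    (H1 : ∀ C ∈ H, H.card ≤ (LC C (x C) ∩ LC C (y C)).card) :
    Col LA LS LC := by
  classical
  let Pd : Fin k₁ ⊕ Fin s ⊕ (Fin k₃ × Fin 3) → Prop :=
    Sum.elim (fun _ => True) (Sum.elim (fun _ => True) fun p => p.1 ∈ U ∨ p.2 ≠ y p.1)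
  let tC : Fin k₃ → Fin 3 → Finset ℕ := fun C a =>
    if C ∉ U ∧ a = x C then LC C (x C) ∩ LC C (y C) else LC C a
  let t : Fin k₁ ⊕ Fin s ⊕ (Fin k₃ × Fin 3) → Finset ℕ :=
    Sum.elim LA (Sum.elim LS fun p => tC p.1 p.2)
  have tU : ∀ C ∈ U, ∀ a, tC C a = LC C a := by
    intro C hC a; simp [tC, hC]
  have tx : ∀ C, C ∉ U → tC C (x C) = LC C (x C) ∩ LC C (y C) := by
    intro C hC; simp [tC, hC]
  have tz : ∀ C a, a ≠ x C → tC C a = LC C a := by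
    intro C a ha; simp [tC, ha]
  have hall : ∀ X : Finset (Fin k₁ ⊕ Fin s ⊕ (Fin k₃ × Fin 3)), (∀ i ∈ X, Pd i) →
      X.card ≤ (X.biUnion t).card := by
    intro X hX
    have hsub : ∀ i ∈ X, t i ⊆ X.biUnion t := fun i hi => Finset.subset_biUnion_of_mem t hi
    have hle : ∀ Y, Y ⊆ X.biUnion t → Y.card ≤ (X.biUnion t).card :=
      fun Y hY => Finset.card_le_card hY
    have hcard := card_split X
    set XA := (Finset.univ.filter fun i => Sum.inl i ∈ X) with hXA
    set XS := (Finset.univ.filter fun i => Sum.inr (Sum.inl i) ∈ X) with hXS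
    let n : Fin k₃ → Finset (Fin 3) := fun C =>
      Finset.univ.filter fun a => Sum.inr (Sum.inr (C, a)) ∈ X
    have hn : ∀ C a, a ∈ n C ↔ Sum.inr (Sum.inr (C, a)) ∈ X := by simp [n]
    change X.card = XA.card + XS.card + ∑ C, (n C).card at hcard
    have hsubC : ∀ C a, a ∈ n C → tC C a ⊆ X.biUnion t := fun C a ha =>
      hsub _ ((hn C a).1 ha)
    have hny : ∀ C, C ∉ U → y C ∉ n C := by
      intro C hC h
      have := hX _ ((hn C _).1 h)
      simp [Pd, hC] at this
    have hXAk : XA.card ≤ k₁ := by simpa using Finset.card_le_univ XA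
    have hXSk : XS.card ≤ s := by simpa using Finset.card_le_univ XS
    have hn3 : ∀ C, (n C).card ≤ 3 := fun C => by simpa using Finset.card_le_univ (n C)
    have hn2 : ∀ C, C ∉ U → (n C).card ≤ 2 := by
      intro C hC
      by_contra hcon
      exact hny C hC (fin3_three (by omega) _)
    have hdouble : ∀ C, C ∉ U → 2 ≤ (n C).card →
        ((LC C (x C) ∩ LC C (y C)) ∪ LC C (z C)).card ≤ (X.biUnion t).card := by
      intro C hC h2
      have hx1 := hxy C hC
      have hx2 := hxz C hC
      have hx3 := hyz C hC
      have hyn := hny C hC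
      obtain ⟨a, ha, b, hb, hab⟩ := fin3_two h2
      have hay : a ≠ y C := fun h => hyn (h ▸ ha)
      have hby : b ≠ y C := fun h => hyn (h ▸ hb)
      have hxn : x C ∈ n C ∧ z C ∈ n C := by
        have : (a = x C ∧ b = z C) ∨ (a = z C ∧ b = x C) := by
          clear hny hn2 hn hyn ha hb h2 hcard
          omega
        rcases this with ⟨rfl, rfl⟩ | ⟨rfl, rfl⟩
        · exact ⟨ha, hb⟩
        · exact ⟨hb, ha⟩
      apply hle
      apply Finset.union_subset
      · have := hsubC C _ hxn.1
        rwa [tx C hC] at this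
      · have := hsubC C _ hxn.2
        rwa [tz C _ hx2.symm] at this
    -- Case 1
    by_cases c1 : ∃ C ∈ U, (n C).card = 3
    · obtain ⟨C, hC, h3⟩ := c1
      have hall3 := fin3_three (le_of_eq h3.symm)
      have h1 := U3 C hC
      have h2 : ((LC C 0 ∪ LC C 1) ∪ LC C 2).card ≤ (X.biUnion t).card := by
        apply hle
        have hh : ∀ a, LC C a ⊆ X.biUnion t := by
          intro a
          have := hsubC C a (hall3 a)
          rwa [tU C hC] at this
        exact Finset.union_subset (Finset.union_subset (hh 0) (hh 1)) (hh 2)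
      have h3 := sum_le_of (fun C => (n C).card) 2 U (by
        intro C
        split_ifs with hCU
        · exact hn3 C
        · exact hn2 C hCU)
      omega
    have hn2' : ∀ C, (n C).card ≤ 2 := by
      intro C
      by_cases hC : C ∈ U
      · have := hn3 C
        by_contra hcon
        exact c1 ⟨C, hC, by omega⟩
      · exact hn2 C hC
    have hs2 := sum_le_of (fun C => (n C).card) 2 ∅ (by intro C; simpa using hn2' C)
    rw [Finset.card_empty] at hs2
    by_cases c2 : XS.Nonempty
    · obtain ⟨i, hi, hmax⟩ := XS.exists_max_image (fun i => (i : ℕ)) c2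
      have h1 := card_filter_fin_le XS i hmax
      have h2 := hle _ (hsub _ (Finset.mem_filter.1 hi).2)
      have h3 := hS i
      change (LS i).card ≤ _ at h2
      omega
    have hXS0 : XS.card = 0 := by
      rw [Finset.card_eq_zero]; exact Finset.not_nonempty_iff_eq_empty.1 c2
    by_cases c3 : ∃ C, C ∉ H ∧ 2 ≤ (n C).card
    · obtain ⟨C, hCH, h2⟩ := c3
      have : 2 * k₃ + k₁ ≤ (X.biUnion t).card := by
        by_cases hC : C ∈ U
        · obtain ⟨a, ha, b, hb, hab⟩ := fin3_two h2
          refine (U2 C hC a b hab).trans (hle _ ?_)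
          have h1 := hsubC C a ha
          have h2 := hsubC C b hb
          rw [tU C hC] at h1 h2
          exact Finset.union_subset h1 h2
        · exact (G2 C hC hCH).trans (hdouble C hC h2)
      omega
    have hn1 : ∀ C, C ∉ H → (n C).card ≤ 1 := by
      intro C hC
      by_contra hcon
      exact c3 ⟨C, hC, by omega⟩
    by_cases c4 : ∃ C ∈ H, 2 ≤ (n C).card
    · obtain ⟨C, hC, h2⟩ := c4
      have h1 := (H2 C hC).trans (hdouble C (hHU C hC) h2)
      have h3 := sum_le_of (fun C => (n C).card) 1 H (by
        intro C
        split_ifs with hCU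
        · exact hn2' C
        · exact hn1 C hCU)
      omega
    have hn1' : ∀ C, (n C).card ≤ 1 := by
      intro C
      by_cases hC : C ∈ H
      · by_contra hcon
        exact c4 ⟨C, hC, by omega⟩
      · exact hn1 C hC
    have hs1 := sum_le_of (fun C => (n C).card) 1 ∅ (by intro C; simpa using hn1' C)
    rw [Finset.card_empty] at hs1
    by_cases c5 : XA.Nonempty
    · obtain ⟨i, hi, hmax⟩ := XA.exists_max_image (fun i => (i : ℕ)) c5
      have h1 := card_filter_fin_le XA i hmax
      have h2 := hle _ (hsub _ (Finset.mem_filter.1 hi).2)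
      have h3 := hA i
      change (LA i).card ≤ _ at h2
      omega
    have hXA0 : XA.card = 0 := by
      rw [Finset.card_eq_zero]; exact Finset.not_nonempty_iff_eq_empty.1 c5
    by_cases c6 : ∃ C, ∃ a ∈ n C, k₃ ≤ (tC C a).card
    · obtain ⟨C, a, ha, h⟩ := c6
      have := hle _ (hsubC C a ha)
      omega
    push Not at c6
    have hH : ∀ C a, a ∈ n C → C ∈ H ∧ a = x C := by
      intro C a ha
      have h := c6 C a ha
      have hCU : C ∉ U := by
        intro hC
        rw [tU C hC] at h
        have := h31 C a
        omega
      have hax : a = x C := by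
        by_contra hax
        rw [tz C a hax] at h
        have := h31 C a
        omega
      refine ⟨?_, hax⟩
      by_contra hCH
      subst hax
      rw [tx C hCU] at h
      have := G1 C hCU hCH
      omega
    have h3 := sum_le_of (fun C => (n C).card) 0 H (by
      intro C
      split_ifs with hC
      · exact hn1' C
      · have : n C = ∅ := by
          rw [Finset.eq_empty_iff_forall_notMem]
          intro a ha
          exact hC (hH C a ha).1
        simp [this])
    by_cases c7 : ∃ C, ∃ a, a ∈ n C
    · obtain ⟨C, a, ha⟩ := c7
      obtain ⟨hCH, rfl⟩ := hH C a ha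
      have h1 := hle _ (hsubC C _ ha)
      rw [tx C (hHU C hCH)] at h1
      have := H1 C hCH
      omega
    · have : ∑ C, (n C).card = 0 := by
        refine Finset.sum_eq_zero fun C _ => ?_
        rw [Finset.card_eq_zero, Finset.eq_empty_iff_forall_notMem]
        intro a ha
        exact c7 ⟨C, a, ha⟩
      omega
  obtain ⟨c, hc, hinj⟩ := hallPred Pd t hall
  let ρ : Fin k₃ → Fin 3 → Fin 3 := fun C a => if C ∉ U ∧ a = y C then x C else a
  have hρP : ∀ C a, Pd (Sum.inr (Sum.inr (C, ρ C a))) := by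
    intro C a
    simp only [Pd, ρ, Sum.elim_inr]
    by_cases hC : C ∈ U
    · exact Or.inl hC
    · right
      split_ifs with h
      · exact hxy C hC
      · exact fun h' => h ⟨hC, h'⟩
  refine ⟨fun i => c (Sum.inl i), fun i => c (Sum.inr (Sum.inl i)),
    fun C a => c (Sum.inr (Sum.inr (C, ρ C a))), ?_, ?_, ?_, ?_, ?_, ?_, ?_, ?_, ?_⟩
  · intro i; exact hc (Sum.inl i) trivial
  · intro i; exact hc (Sum.inr (Sum.inl i)) trivial
  · intro C a
    have h := hc _ (hρP C a)
    change c _ ∈ tC C (ρ C a) at h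
    by_cases hC : C ∈ U
    · rw [tU C hC] at h
      simpa [ρ, hC] using h
    · by_cases hay : a = y C
      · have e : ρ C a = x C := by simp [ρ, hC, hay]
        have h' : c (Sum.inr (Sum.inr (C, ρ C a))) ∈ tC C (x C) := e ▸ h
        rw [tx C hC] at h'
        rw [hay] at h' ⊢
        exact (Finset.mem_inter.1 h').2
      · have e : ρ C a = a := by simp [ρ, hay]
        show c (Sum.inr (Sum.inr (C, ρ C a))) ∈ LC C a
        rw [e] at h ⊢
        by_cases hax : a = x C
        · rw [hax, tx C hC] at h
          rw [hax]
          exact (Finset.mem_inter.1 h).1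
        · rwa [tz C a hax] at h
  · intro i j hij h
    exact hij (by simpa using hinj (Sum.inl i) (Sum.inl j) trivial trivial h)
  · intro i j hij h
    exact hij (by
      simpa using hinj (Sum.inr (Sum.inl i)) (Sum.inr (Sum.inl j)) trivial trivial h)
  · intro i j h
    simpa using hinj (Sum.inl i) (Sum.inr (Sum.inl j)) trivial trivial h
  · intro i j a h
    simpa using hinj (Sum.inl i) _ trivial (hρP j a) h
  · intro i j a h
    simpa using hinj (Sum.inr (Sum.inl i)) _ trivial (hρP j a) h
  · intro i j a b hij h
    have := hinj _ _ (hρP i a) (hρP j b) h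
    simp only [Sum.inr.injEq, Prod.mk.injEq] at this
    exact hij this.1


theorem fin3_cases {x y z : Fin 3} (hxy : x ≠ y) (hxz : x ≠ z) (hyz : y ≠ z) (a : Fin 3) :
    a = x ∨ a = y ∨ a = z := by omega

theorem fin3_sum (g : Fin 3 → ℕ) {x y z : Fin 3} (hxy : x ≠ y) (hxz : x ≠ z) (hyz : y ≠ z) :
    g x + g y + g z = g 0 + g 1 + g 2 := by
  have : ∀ x y z : Fin 3, x ≠ y → x ≠ z → y ≠ z → g x + g y + g z = g 0 + g 1 + g 2 := by
    simp only [Fin.forall_fin_succ]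
    simp
    omega
  exact this x y z hxy hxz hyz

/-- The numerical conditions of the lemma, in terms of list sizes. -/
structure Cond {k₁ s k₃ : ℕ} (LA : Fin k₁ → Finset ℕ) (LS : Fin s → Finset ℕ)
    (LC : Fin k₃ → Fin 3 → Finset ℕ) : Prop where
  hA : ∀ i, k₃ + (i + 1) ≤ (LA i).card
  hS : ∀ i, 2 * k₃ + k₁ + (i + 1) ≤ (LS i).card
  h31 : ∀ C a, k₃ ≤ (LC C a).card
  h32 : ∀ C a b, a ≠ b → 2 * k₃ + k₁ ≤ (LC C a).card + (LC C b).card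
  h33 : ∀ C, 4 * k₃ + 2 * k₁ + s ≤ (LC C 0).card + (LC C 1).card + (LC C 2).card + 1

theorem card_three (X Y Z : Finset ℕ) (h : X ∩ Y ∩ Z = ∅) :
    (X ∪ Y ∪ Z).card + ((X ∩ Y).card + (X ∩ Z).card + (Y ∩ Z).card) =
      X.card + Y.card + Z.card := by
  have e1 := Finset.card_union_add_card_inter X Y
  have e2 := Finset.card_union_add_card_inter (X ∪ Y) Z
  have e3 : ((X ∪ Y) ∩ Z).card = (X ∩ Z).card + (Y ∩ Z).card := by
    rw [Finset.union_inter_distrib_right, Finset.card_union_of_disjoint]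
    rw [Finset.disjoint_iff_inter_eq_empty, ← h]
    ext a; simp only [Finset.mem_inter]; tauto
  omega

theorem card_two_le (X Y Z : Finset ℕ) (h : X ∩ Y ∩ Z = ∅) :
    (X ∩ Y).card + (X ∩ Z).card ≤ X.card := by
  rw [← Finset.card_union_of_disjoint]
  · exact Finset.card_le_card (Finset.union_subset Finset.inter_subset_left
      Finset.inter_subset_left)
  · rw [Finset.disjoint_iff_inter_eq_empty, ← h]
    ext a; simp only [Finset.mem_inter]; tauto

theorem finalCase {k₁ s k₃ : ℕ} (LA : Fin k₁ → Finset ℕ) (LS : Fin s → Finset ℕ)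
    (LC : Fin k₃ → Fin 3 → Finset ℕ) (hc : Cond LA LS LC)
    (htr : ∀ C c, ¬ (∀ a, c ∈ LC C a))
    (hsh : ∀ C x y z, x ≠ y → x ≠ z → y ≠ z → 0 < (LC C x ∩ LC C y).card →
      (LC C z).card + 1 ≤ k₃ + k₁) :
    Col LA LS LC := by
  classical
  have htr' : ∀ C x y z, x ≠ y → x ≠ z → y ≠ z → LC C x ∩ LC C y ∩ LC C z = ∅ := by
    intro C x y z hxy hxz hyz
    rw [Finset.eq_empty_iff_forall_notMem]
    intro c h
    simp only [Finset.mem_inter] at h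
    refine htr C c fun a => ?_
    rcases fin3_cases hxy hxz hyz a with rfl | rfl | rfl
    · exact h.1.1
    · exact h.1.2
    · exact h.2
  have hun : ∀ C x y z, x ≠ y → x ≠ z → y ≠ z →
      ((LC C x ∩ LC C y) ∪ LC C z).card = (LC C x ∩ LC C y).card + (LC C z).card := by
    intro C x y z hxy hxz hyz
    rw [Finset.card_union_of_disjoint]
    rw [Finset.disjoint_iff_inter_eq_empty]
    exact htr' C x y z hxy hxz hyz
  let good : Fin k₃ → Prop := fun C => ∃ x y z, x ≠ y ∧ x ≠ z ∧ y ≠ z ∧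
    0 < (LC C x ∩ LC C y).card ∧ 2 * k₃ + k₁ ≤ (LC C x ∩ LC C y).card + (LC C z).card
  let N := Finset.univ.filter fun C => ¬ good C
  let σ : Fin k₃ → ℕ := fun C =>
    (LC C 0 ∩ LC C 1).card + (LC C 0 ∩ LC C 2).card + (LC C 1 ∩ LC C 2).card
  obtain ⟨U, hUN, hU1, hU2⟩ := threshold N σ (2 * k₃ + k₁)
  let H := N \ U
  have hcardle : U.card + H.card ≤ k₃ := by
    have h1 : H.card + U.card = N.card := Finset.card_sdiff_add_card_eq_card hUN
    have h2 : N.card ≤ k₃ := by simpa using Finset.card_le_univ N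
    omega
  have hex : ∀ C, ∃ x y z : Fin 3, C ∉ U → x ≠ y ∧ x ≠ z ∧ y ≠ z ∧
      (C ∉ H → 2 * k₃ + k₁ ≤ ((LC C x ∩ LC C y) ∪ LC C z).card ∧
        k₃ ≤ (LC C x ∩ LC C y).card) ∧
      (C ∈ H → k₃ + k₁ + H.card ≤ ((LC C x ∩ LC C y) ∪ LC C z).card ∧
        H.card ≤ (LC C x ∩ LC C y).card) := by
    intro C
    by_cases hCU : C ∈ U
    · exact ⟨0, 0, 0, fun h => absurd hCU h⟩
    by_cases hCH : C ∈ H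
    · have hCN : C ∈ N := (Finset.mem_sdiff.1 hCH).1
      have hσ := hU2 C hCN hCU
      have n01 : (0 : Fin 3) ≠ 1 := by decide
      have n02 : (0 : Fin 3) ≠ 2 := by decide
      have n12 : (1 : Fin 3) ≠ 2 := by decide
      have key := numericH k₁ s k₃ U.card H.card (LC C 0 ∩ LC C 1).card
        (LC C 0 ∩ LC C 2).card (LC C 1 ∩ LC C 2).card (LC C 0).card (LC C 1).card (LC C 2).card
        (hsh C 0 1 2 n01 n02 n12) (hsh C 0 2 1 n02 n01 n12.symm)
        (hsh C 1 2 0 n12 n01.symm n02.symm)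
        (hc.h31 C 0) (hc.h31 C 1) (hc.h31 C 2) (hc.h32 C 0 1 n01) (hc.h32 C 0 2 n02)
        (hc.h32 C 1 2 n12) (hc.h33 C)
        (card_two_le _ _ _ (htr' C 0 1 2 n01 n02 n12))
        (by
          have := card_two_le _ _ _ (htr' C 1 0 2 n01.symm n12 n02)
          rwa [Finset.inter_comm (LC C 1) (LC C 0)] at this)
        (by
          have := card_two_le _ _ _ (htr' C 2 0 1 n02.symm n12.symm n01)
          rwa [Finset.inter_comm (LC C 2) (LC C 0), Finset.inter_comm (LC C 2) (LC C 1)] at this)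
        hσ hcardle C.pos
      rcases key with ⟨h1, h2⟩ | ⟨h1, h2⟩ | ⟨h1, h2⟩
      · refine ⟨0, 1, 2, fun _ => ⟨n01, n02, n12, fun h => absurd hCH h, fun _ => ⟨?_, h1⟩⟩⟩
        rwa [hun C 0 1 2 n01 n02 n12]
      · refine ⟨0, 2, 1, fun _ => ⟨n02, n01, n12.symm, fun h => absurd hCH h, fun _ => ⟨?_, h1⟩⟩⟩
        rwa [hun C 0 2 1 n02 n01 n12.symm]
      · refine ⟨1, 2, 0, fun _ => ⟨n12, n01.symm, n02.symm, fun h => absurd hCH h,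
          fun _ => ⟨?_, h1⟩⟩⟩
        rwa [hun C 1 2 0 n12 n01.symm n02.symm]
    · have hg : good C := by
        by_contra hg
        exact hCH (Finset.mem_sdiff.2 ⟨Finset.mem_filter.2 ⟨Finset.mem_univ _, hg⟩, hCU⟩)
      obtain ⟨x, y, z, hxy, hxz, hyz, hp, hb⟩ := hg
      refine ⟨x, y, z, fun _ => ⟨hxy, hxz, hyz, fun _ => ⟨?_, ?_⟩, fun h => absurd h hCH⟩⟩
      · rwa [hun C x y z hxy hxz hyz]
      · have := hsh C x y z hxy hxz hyz hp
        omega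
  choose x y z hxyz using hex
  refine hallMain LA LS LC U H x y z (fun C hC => (hxyz C hC).1) (fun C hC => (hxyz C hC).2.1)
    (fun C hC => (hxyz C hC).2.2.1) hc.hA hc.hS hc.h31
    (fun C hC => (Finset.mem_sdiff.1 hC).2) ?_ ?_
    (fun C hC hCH => ((hxyz C hC).2.2.2.1 hCH).1)
    (fun C hC hCH => ((hxyz C hC).2.2.2.1 hCH).2)
    (fun C hCH => ((hxyz C (Finset.mem_sdiff.1 hCH).2).2.2.2.2 hCH).1)
    (fun C hCH => ((hxyz C (Finset.mem_sdiff.1 hCH).2).2.2.2.2 hCH).2)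
  · intro C hC
    have h1 := hU1 C hC
    have h2 := card_three _ _ _ (htr' C 0 1 2 (by decide) (by decide) (by decide))
    have h3 := hc.h33 C
    simp only [σ] at h1
    omega
  · intro C hC a b hab
    have hng : ¬ good C := (Finset.mem_filter.1 (hUN hC)).2
    obtain ⟨d, had, hbd⟩ : ∃ d : Fin 3, a ≠ d ∧ b ≠ d := by
      revert a b; decide
    have h1 := Finset.card_union_add_card_inter (LC C a) (LC C b)
    have h2 := hc.h32 C a b hab
    rcases Nat.eq_zero_or_pos (LC C a ∩ LC C b).card with h0 | h0
    · omega
    · have h3 : ¬ (2 * k₃ + k₁ ≤ (LC C a ∩ LC C b).card + (LC C d).card) :=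
        fun h => hng ⟨a, b, d, hab, had, hbd, h0, h⟩
      have h4 := hc.h33 C
      have h5 := fin3_sum (fun a => (LC C a).card) hab had hbd
      omega

theorem lift1 {k₁ s n : ℕ} (LA : Fin k₁ → Finset ℕ) (LS : Fin s → Finset ℕ)
    (LC : Fin (n + 1) → Fin 3 → Finset ℕ) (p : Fin (n + 1)) (c : ℕ) (hc : ∀ a, c ∈ LC p a)
    (h : Col (fun i => (LA i).erase c) (fun i => (LS i).erase c)
      (fun j a => (LC (p.succAbove j) a).erase c)) : Col LA LS LC := by
  obtain ⟨cA, cS, cC, mA, mS, mC, iA, iS, iAS, iAC, iSC, iCC⟩ := h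
  simp only [Finset.mem_erase] at mA mS mC
  refine ⟨cA, cS, p.insertNth (α := fun _ => Fin 3 → ℕ) (fun _ => c) cC, fun i => (mA i).2,
    fun i => (mS i).2, ?_, iA, iS, iAS, ?_, ?_, ?_⟩
  · rw [Fin.forall_iff_succAbove p]
    simp only [Fin.insertNth_apply_same, Fin.insertNth_apply_succAbove]
    exact ⟨hc, fun j a => (mC j a).2⟩
  · intro i
    rw [Fin.forall_iff_succAbove p]
    simp only [Fin.insertNth_apply_same, Fin.insertNth_apply_succAbove]
    exact ⟨fun _ => (mA i).1, iAC i⟩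
  · intro i
    rw [Fin.forall_iff_succAbove p]
    simp only [Fin.insertNth_apply_same, Fin.insertNth_apply_succAbove]
    exact ⟨fun _ => (mS i).1, iSC i⟩
  · rw [Fin.forall_iff_succAbove p]
    constructor
    · rw [Fin.forall_iff_succAbove p]
      simp only [Fin.insertNth_apply_same, Fin.insertNth_apply_succAbove]
      exact ⟨fun _ _ h => absurd rfl h, fun j a b _ => ((mC j b).1).symm⟩
    · intro i
      rw [Fin.forall_iff_succAbove p]
      simp only [Fin.insertNth_apply_same, Fin.insertNth_apply_succAbove]
      exact ⟨fun a b _ => (mC i a).1, fun j a b hij => iCC i j a b (fun h => hij (h ▸ rfl))⟩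

theorem liftS {k₁ s n : ℕ} (LA : Fin k₁ → Finset ℕ) (LS : Fin s → Finset ℕ)
    (LC : Fin (n + 1) → Fin 3 → Finset ℕ) (p : Fin (n + 1)) (c : ℕ) (z : Fin 3)
    (hc : ∀ a, a ≠ z → c ∈ LC p a)
    (h : Col (fun i => (LA i).erase c)
      (Fin.snoc (α := fun _ => Finset ℕ) (fun i => (LS i).erase c) ((LC p z).erase c))
      (fun j a => (LC (p.succAbove j) a).erase c)) : Col LA LS LC := by
  obtain ⟨cA, cS, cC, mA, mS, mC, iA, iS, iAS, iAC, iSC, iCC⟩ := h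
  have mS1 := fun i => mS (Fin.castSucc i)
  have mS2 := mS (Fin.last s)
  simp only [Fin.snoc_castSucc, Fin.snoc_last, Finset.mem_erase] at mS1 mS2
  simp only [Finset.mem_erase] at mA mC
  refine ⟨cA, fun i => cS i.castSucc, p.insertNth (α := fun _ => Fin 3 → ℕ)
    (fun a => if a = z then cS (Fin.last s) else c) cC, fun i => (mA i).2,
    fun i => (mS1 i).2, ?_, iA, ?_, fun i j => iAS i _, ?_, ?_, ?_⟩
  · rw [Fin.forall_iff_succAbove p]
    simp only [Fin.insertNth_apply_same, Fin.insertNth_apply_succAbove]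
    refine ⟨fun a => ?_, fun j a => (mC j a).2⟩
    split_ifs with ha
    · rw [ha]; exact mS2.2
    · exact hc a ha
  · intro i j hij
    exact iS _ _ (fun h => hij (Fin.castSucc_injective _ h))
  · intro i
    rw [Fin.forall_iff_succAbove p]
    simp only [Fin.insertNth_apply_same, Fin.insertNth_apply_succAbove]
    refine ⟨fun a => ?_, iAC i⟩
    split_ifs with ha
    · exact iAS _ _
    · exact (mA i).1
  · intro i
    rw [Fin.forall_iff_succAbove p]
    simp only [Fin.insertNth_apply_same, Fin.insertNth_apply_succAbove]
    refine ⟨fun a => ?_, iSC _⟩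
    split_ifs with ha
    · exact iS _ _ (Fin.castSucc_lt_last i).ne
    · exact (mS1 i).1
  · have hd : ∀ j a b, (if a = z then cS (Fin.last s) else c) ≠ cC j b := by
      intro j a b
      split_ifs with ha
      · exact iSC _ _ _
      · exact ((mC j b).1).symm
    rw [Fin.forall_iff_succAbove p]
    constructor
    · rw [Fin.forall_iff_succAbove p]
      simp only [Fin.insertNth_apply_same, Fin.insertNth_apply_succAbove]
      exact ⟨fun _ _ h => absurd rfl h, fun j a b _ => hd j a b⟩
    · intro i
      rw [Fin.forall_iff_succAbove p]
      simp only [Fin.insertNth_apply_same, Fin.insertNth_apply_succAbove]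
      exact ⟨fun a b _ => (hd i b a).symm, fun j a b hij => iCC i j a b (fun h => hij (h ▸ rfl))⟩

theorem liftA {k₁ s n : ℕ} (LA : Fin k₁ → Finset ℕ) (LS : Fin s → Finset ℕ)
    (LC : Fin (n + 1) → Fin 3 → Finset ℕ) (p : Fin (n + 1)) (c : ℕ) (z : Fin 3)
    (hc : ∀ a, a ≠ z → c ∈ LC p a)
    (h : Col (Fin.snoc (α := fun _ => Finset ℕ) (fun i => (LA i).erase c) ((LC p z).erase c))
      (fun i => (LS i).erase c)
      (fun j a => (LC (p.succAbove j) a).erase c)) : Col LA LS LC := by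
  have swap : ∀ {k₁ s k₃ : ℕ} {LA : Fin k₁ → Finset ℕ} {LS : Fin s → Finset ℕ}
      {LC : Fin k₃ → Fin 3 → Finset ℕ}, Col LA LS LC → Col LS LA LC := by
    rintro k₁ s k₃ LA LS LC ⟨cA, cS, cC, mA, mS, mC, iA, iS, iAS, iAC, iSC, iCC⟩
    exact ⟨cS, cA, cC, mS, mA, mC, iS, iA, fun i j => (iAS j i).symm, iSC, iAC, iCC⟩
  exact swap (liftS LS LA LC p c z hc (swap h))

theorem erase_ge (X : Finset ℕ) (c : ℕ) : X.card ≤ (X.erase c).card + 1 := by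
  have := Finset.pred_card_le_card_erase (s := X) (a := c)
  omega

theorem erase_two (X Y : Finset ℕ) (c : ℕ) (h : ¬ (c ∈ X ∧ c ∈ Y)) :
    X.card + Y.card ≤ (X.erase c).card + (Y.erase c).card + 1 := by
  have h1 := erase_ge X c
  have h2 := erase_ge Y c
  by_cases hX : c ∈ X
  · have : c ∉ Y := fun h' => h ⟨hX, h'⟩
    rw [Finset.erase_eq_of_notMem this]; omega
  · rw [Finset.erase_eq_of_notMem hX]; omega

theorem erase_three (f : Fin 3 → Finset ℕ) (c : ℕ) (h : ¬ ∀ a, c ∈ f a) :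
    (f 0).card + (f 1).card + (f 2).card ≤
      ((f 0).erase c).card + ((f 1).erase c).card + ((f 2).erase c).card + 2 := by
  have h0 := erase_ge (f 0) c
  have h1 := erase_ge (f 1) c
  have h2 := erase_ge (f 2) c
  push Not at h
  obtain ⟨a, ha⟩ := h
  have : (f a).card = ((f a).erase c).card := by rw [Finset.erase_eq_of_notMem ha]
  fin_cases a <;> simp at this <;> omega

theorem core : ∀ (k₃ k₁ s : ℕ) (LA : Fin k₁ → Finset ℕ) (LS : Fin s → Finset ℕ)
    (LC : Fin k₃ → Fin 3 → Finset ℕ), Cond LA LS LC → Col LA LS LC := by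
  intro k₃
  induction k₃ with
  | zero =>
    intro k₁ s LA LS LC hc
    exact finalCase LA LS LC hc (fun C => C.elim0) (fun C => C.elim0)
  | succ n ih =>
    intro k₁ s LA LS LC hc
    by_cases htr : ∃ C c, ∀ a, c ∈ LC C a
    · obtain ⟨p, c, hpc⟩ := htr
      refine lift1 LA LS LC p c hpc (ih _ _ _ _ _ ⟨?_, ?_, ?_, ?_, ?_⟩)
      · intro i
        have := hc.hA i
        have := erase_ge (LA i) c
        omega
      · intro i
        have := hc.hS i
        have := erase_ge (LS i) c
        omega
      · intro j a
        have := hc.h31 (p.succAbove j) a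
        have := erase_ge (LC (p.succAbove j) a) c
        omega
      · intro j a b hab
        have := hc.h32 (p.succAbove j) a b hab
        have := erase_ge (LC (p.succAbove j) a) c
        have := erase_ge (LC (p.succAbove j) b) c
        omega
      · intro j
        have := hc.h33 (p.succAbove j)
        have := erase_ge (LC (p.succAbove j) 0) c
        have := erase_ge (LC (p.succAbove j) 1) c
        have := erase_ge (LC (p.succAbove j) 2) c
        omega
    replace htr : ∀ C c, ¬ (∀ a, c ∈ LC C a) := fun C c h => htr ⟨C, c, h⟩
    have hmem : ∀ {C x y z c}, x ≠ y → x ≠ z → y ≠ z → c ∈ LC C x → c ∈ LC C y →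
        (∀ a, a ≠ z → c ∈ LC C a) ∧ c ∉ LC C z := by
      intro C x y z c hxy hxz hyz hx hy
      have h1 : ∀ a, a ≠ z → c ∈ LC C a := by
        intro a ha
        rcases fin3_cases hxy hxz hyz a with rfl | rfl | rfl
        · exact hx
        · exact hy
        · exact absurd rfl ha
      refine ⟨h1, fun hz => htr C c fun a => ?_⟩
      by_cases ha : a = z
      · rw [ha]; exact hz
      · exact h1 a ha
    by_cases hS' : ∃ C x y z c, x ≠ y ∧ x ≠ z ∧ y ≠ z ∧ c ∈ LC C x ∧ c ∈ LC C y ∧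
        2 * (n + 1) + k₁ + s ≤ (LC C z).card + 1
    · obtain ⟨p, x, y, z, c, hxy, hxz, hyz, hx, hy, hz⟩ := hS'
      obtain ⟨hp, hcz⟩ := hmem hxy hxz hyz hx hy
      refine liftS LA LS LC p c z hp (ih _ _ _ _ _ ⟨?_, ?_, ?_, ?_, ?_⟩)
      · intro i
        have := hc.hA i
        have := erase_ge (LA i) c
        omega
      · rw [Fin.forall_fin_succ']
        constructor
        · intro i
          have := hc.hS i
          have := erase_ge (LS i) c
          simp only [Fin.snoc_castSucc, Fin.val_castSucc]
          omega
        · simp only [Fin.snoc_last, Fin.val_last]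
          rw [Finset.erase_eq_of_notMem hcz]
          omega
      · intro j a
        have := hc.h31 (p.succAbove j) a
        have := erase_ge (LC (p.succAbove j) a) c
        omega
      · intro j a b hab
        have := hc.h32 (p.succAbove j) a b hab
        have := erase_ge (LC (p.succAbove j) a) c
        have := erase_ge (LC (p.succAbove j) b) c
        omega
      · intro j
        have := hc.h33 (p.succAbove j)
        have := erase_three (LC (p.succAbove j)) c (htr _ _)
        omega
    have htight : ∀ C x y c, x ≠ y → c ∈ LC C x → c ∈ LC C y →
        2 * (n + 1) + k₁ + 1 ≤ (LC C x).card + (LC C y).card := by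
      intro C x y c hxy hx hy
      obtain ⟨z, hxz, hyz⟩ : ∃ d : Fin 3, x ≠ d ∧ y ≠ d := by
        clear hx hy
        revert x y; decide
      by_contra hcon
      apply hS'
      refine ⟨C, x, y, z, c, hxy, hxz, hyz, hx, hy, ?_⟩
      have h4 := hc.h33 C
      have h5 := fin3_sum (fun a => (LC C a).card) hxy hxz hyz
      omega
    by_cases hA' : ∃ C x y z c, x ≠ y ∧ x ≠ z ∧ y ≠ z ∧ c ∈ LC C x ∧ c ∈ LC C y ∧
        (n + 1) + k₁ ≤ (LC C z).card
    · obtain ⟨p, x, y, z, c, hxy, hxz, hyz, hx, hy, hz⟩ := hA'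
      obtain ⟨hp, hcz⟩ := hmem hxy hxz hyz hx hy
      refine liftA LA LS LC p c z hp (ih _ _ _ _ _ ⟨?_, ?_, ?_, ?_, ?_⟩)
      · rw [Fin.forall_fin_succ']
        constructor
        · intro i
          have := hc.hA i
          have := erase_ge (LA i) c
          simp only [Fin.snoc_castSucc, Fin.val_castSucc]
          omega
        · simp only [Fin.snoc_last, Fin.val_last]
          rw [Finset.erase_eq_of_notMem hcz]
          omega
      · intro i
        have := hc.hS i
        have := erase_ge (LS i) c
        omega
      · intro j a
        have := hc.h31 (p.succAbove j) a
        have := erase_ge (LC (p.succAbove j) a) c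
        omega
      · intro j a b hab
        have := hc.h32 (p.succAbove j) a b hab
        have := erase_ge (LC (p.succAbove j) a) c
        have := erase_ge (LC (p.succAbove j) b) c
        by_cases hh : c ∈ LC (p.succAbove j) a ∧ c ∈ LC (p.succAbove j) b
        · have := htight _ a b c hab hh.1 hh.2
          omega
        · have := erase_two _ _ c hh
          omega
      · intro j
        have := hc.h33 (p.succAbove j)
        have := erase_three (LC (p.succAbove j)) c (htr _ _)
        omega
    refine finalCase LA LS LC hc htr ?_
    intro C x y z hxy hxz hyz hpos
    obtain ⟨c, hcm⟩ := Finset.card_pos.1 hpos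
    rw [Finset.mem_inter] at hcm
    by_contra hcon
    exact hA' ⟨C, x, y, z, c, hxy, hxz, hyz, hcm.1, hcm.2, by omega⟩

open Finset in
/-- The off-line technical lemma.  `G` is a complete multipartite graph whose parts are
the fibres of `P`, labelled by `Fin k₁ ⊕ Fin s ⊕ Fin k₃`: the ordered classes
`𝒜 = (A₁,…,A_{k₁})` and `𝒮 = (S₁,…,S_s)` consist of parts of size 1 and `𝒞` consists of
all parts of size 3.  (`Fin` is 0-indexed, so the `i`-th part of the 1-indexed statement
corresponds to the index `i` with value `(i : ℕ) + 1`.)  Under conditions (1), (1'),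
(3.1), (3.2), (3.3) on `f`, the graph `G` is `f`-choosable. -/
theorem choosable_of_technical_conditions
    (k₁ s k₃ : ℕ)
    (P : V → Fin k₁ ⊕ Fin s ⊕ Fin k₃)
    (G : SimpleGraph V)
    (hAdj : ∀ u v, G.Adj u v ↔ P u ≠ P v)
    (hA : ∀ i : Fin k₁, (univ.filter fun v => P v = Sum.inl i).card = 1)
    (hS : ∀ i : Fin s, (univ.filter fun v => P v = Sum.inr (Sum.inl i)).card = 1)
    (hC : ∀ i : Fin k₃, (univ.filter fun v => P v = Sum.inr (Sum.inr i)).card = 3)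
    (f : V → ℕ)
    (h1 : ∀ i : Fin k₁, ∀ v, P v = Sum.inl i → k₃ + ((i : ℕ) + 1) ≤ f v)
    (h1' : ∀ i : Fin s, ∀ v, P v = Sum.inr (Sum.inl i) →
      2 * k₃ + k₁ + ((i : ℕ) + 1) ≤ f v)
    (h31 : ∀ i : Fin k₃, ∀ v, P v = Sum.inr (Sum.inr i) → k₃ ≤ f v)
    (h32 : ∀ i : Fin k₃, ∀ u v, P u = Sum.inr (Sum.inr i) → P v = Sum.inr (Sum.inr i) →
      u ≠ v → 2 * k₃ + k₁ ≤ f u + f v)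
    (h33 : ∀ i : Fin k₃,
      4 * k₃ + 2 * k₁ + s - 1 ≤ ∑ v ∈ univ.filter (fun v => P v = Sum.inr (Sum.inr i)), f v) :
    Choosable G f := by
  classical
  intro L hL
  have hvA : ∀ i : Fin k₁, ∃ v, univ.filter (fun v => P v = Sum.inl i) = {v} :=
    fun i => Finset.card_eq_one.1 (hA i)
  have hvS : ∀ i : Fin s, ∃ v, univ.filter (fun v => P v = Sum.inr (Sum.inl i)) = {v} :=
    fun i => Finset.card_eq_one.1 (hS i)
  choose vA hvA using hvA
  choose vS hvS using hvS
  have mA : ∀ i v, P v = Sum.inl i ↔ v = vA i := by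
    intro i v
    have := Finset.ext_iff.1 (hvA i) v
    simpa using this
  have mS : ∀ i v, P v = Sum.inr (Sum.inl i) ↔ v = vS i := by
    intro i v
    have := Finset.ext_iff.1 (hvS i) v
    simpa using this
  have hvC : ∀ i : Fin k₃, ∃ (e : Fin 3 → V) (idx : V → Fin 3),
      (∀ a, P (e a) = Sum.inr (Sum.inr i)) ∧ Function.Injective e ∧
      ∀ v, P v = Sum.inr (Sum.inr i) → e (idx v) = v := by
    intro i
    let E := Finset.equivFinOfCardEq (hC i)
    refine ⟨fun a => (E.symm a).1, fun v => if h : P v = Sum.inr (Sum.inr i) then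
      E ⟨v, by simp [h]⟩ else 0, ?_, ?_, ?_⟩
    · intro a
      exact (Finset.mem_filter.1 (E.symm a).2).2
    · intro a b h
      exact E.symm.injective (Subtype.ext h)
    · intro v h
      simp [h]
  choose e idx he heinj hidx using hvC
  have hcond : Cond (fun i => L (vA i)) (fun i => L (vS i)) (fun i a => L (e i a)) := by
    refine ⟨?_, ?_, ?_, ?_, ?_⟩
    · intro i
      rw [hL]
      exact h1 i _ ((mA i _).2 rfl)
    · intro i
      rw [hL]
      exact h1' i _ ((mS i _).2 rfl)
    · intro i a
      rw [hL]
      exact h31 i _ (he i a)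
    · intro i a b hab
      rw [hL, hL]
      exact h32 i _ _ (he i a) (he i b) (fun h => hab (heinj i h))
    · intro i
      have h := h33 i
      have hset : univ.filter (fun v => P v = Sum.inr (Sum.inr i)) = univ.image (e i) := by
        ext v
        simp only [mem_filter, mem_univ, true_and, mem_image]
        constructor
        · intro hv
          exact ⟨idx i v, hidx i v hv⟩
        · rintro ⟨a, rfl⟩
          exact he i a
      rw [hset, Finset.sum_image (fun a _ b _ hab => heinj i hab), Fin.sum_univ_three] at h
      simp only [hL]
      omega
  obtain ⟨cA, cS, cC, nA, nS, nC, iA, iS, iAS, iAC, iSC, iCC⟩ := core k₃ k₁ s _ _ _ hcond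
  beta_reduce at nA nS nC
  refine ⟨fun v => Sum.elim cA (Sum.elim cS fun i => cC i (idx i v)) (P v), ?_, ?_⟩
  · intro v
    rcases hP : P v with i | i | i
    · have := nA i
      rw [← (mA i v).1 hP] at this
      simpa [hP] using this
    · have := nS i
      rw [← (mS i v).1 hP] at this
      simpa [hP] using this
    · have := nC i (idx i v)
      rw [hidx i v hP] at this
      simpa [hP] using this
  · intro u v huv
    rw [hAdj] at huv
    rcases hu : P u with i | i | i <;> rcases hv : P v with j | j | j <;>
      simp only [hu, hv, Sum.elim_inl, Sum.elim_inr, ne_eq, Sum.inl.injEq, Sum.inr.injEq] at huv ⊢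
    · exact iA i j huv
    · exact iAS i j
    · exact iAC i j _
    · exact fun h => iAS j i h.symm
    · exact iS i j huv
    · exact iSC i j _
    · exact fun h => iAC j i _ h.symm
    · exact fun h => iSC j i _ h.symm
    · exact iCC i j _ _ huv
end
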